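/- arXiv:1212.3529 — 2 statements merged into one kernel-verified Lean document; each statement's English description precedes it below -/
import Mathlib

section
/- Let R be a ring. The following are equivalent: (1) R has a left Artinian left quotient ring Q = C⁻¹R; (2) (a) the ring R̄ = R/n is a left Goldie ring, (b) the prime radical n is a nilpotent ideal, (c) C' ⊆ C, (d) for every 1 ≤ i ≤ ν the left R̄-module f_i contains no infinite direct sum of nonzero submodules, and (e) for every element c̄ ∈ C̄ the map f_i → f_i, f ↦ f·c̄, is injective for all 1 ≤ i ≤ ν. Moreover, if these equivalent conditions hold then C = C', C⁻¹n is the prime radical of Q and is a nilpotent ideal of nilpotency degree ν, and the map Q/C⁻¹n → Q̄, c⁻¹r + C⁻¹n ↦ c̄⁻¹r̄, is a ring isomorphism. -/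
open Function

universe u v

/-- A regular element of a ring: a two-sided non-zero-divisor. -/
def IsRegElem {R : Type*} [Ring R] (c : R) : Prop :=
  (∀ x : R, c * x = 0 → x = 0) ∧ (∀ x : R, x * c = 0 → x = 0)

/-- The set `C` of regular elements of a ring. -/
def regSet (R : Type*) [Ring R] : Set R := {c : R | IsRegElem c}

/-- A (left) ideal is two-sided. -/
def Ideal.IsTwoSidedNC {R : Type*} [Ring R] (I : Ideal R) : Prop :=
  ∀ a ∈ I, ∀ r : R, a * r ∈ I

/-- A prime (two-sided) ideal of a possibly noncommutative ring. -/
def Ideal.IsPrimeNC {R : Type*} [Ring R] (P : Ideal R) : Prop :=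
  P ≠ ⊤ ∧ P.IsTwoSidedNC ∧ ∀ a b : R, (∀ r : R, a * r * b ∈ P) → a ∈ P ∨ b ∈ P

/-- The prime radical `n` of a ring: the intersection of all prime ideals. -/
def primeRadical (R : Type*) [Ring R] : Ideal R := sInf {P : Ideal R | P.IsPrimeNC}

/-- `n` is a nilpotent ideal. -/
def IsNilpotentIdeal {R : Type*} [Ring R] (I : Ideal R) : Prop := ∃ k : ℕ, I ^ (k + 1) = ⊥

/-- `φ : R →+* Q` realizes `Q` as a left quotient ring `C⁻¹R` of `R`:  `R` embeds in `Q`,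
every regular element of `R` becomes invertible in `Q`, and every element of `Q` has the
form `(φ c)⁻¹ * (φ r)` with `c` regular. -/
structure IsLeftQuotRing {R : Type u} {Q : Type v} [Ring R] [Ring Q] (φ : R →+* Q) : Prop where
  inj : Function.Injective φ
  isUnit : ∀ c : R, IsRegElem c → IsUnit (φ c)
  denom : ∀ q : Q, ∃ c r : R, IsRegElem c ∧ φ c * q = φ r

/-- Data of a left quotient ring of `R`. -/
structure LeftQuotData (R : Type u) [Ring R] : Type (u + 1) where
  Q : Type u
  [instQ : Ring Q]
  φ : R →+* Q
  quot : IsLeftQuotRing φ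

attribute [instance] LeftQuotData.instQ

/-- `R` has a left Artinian left quotient ring `Q = C⁻¹R`. -/
def HasArtinianLeftQuot (R : Type u) [Ring R] : Prop :=
  ∃ d : LeftQuotData R, IsArtinianRing d.Q

/-- A subset of a ring is a left annihilator. -/
def IsLeftAnnihilatorSet {R : Type*} [Ring R] (A : Set R) : Prop :=
  ∃ S : Set R, A = {r : R | ∀ s ∈ S, r * s = 0}

/-- The ascending chain condition on left annihilators. -/
def ACCLeftAnnihilators (R : Type*) [Ring R] : Prop :=
  ∀ f : ℕ → Set R, (∀ i, IsLeftAnnihilatorSet (f i)) → (∀ i j, i ≤ j → f i ⊆ f j) →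
    ∃ N, ∀ k, N ≤ k → f k = f N

/-- The module `M` contains no infinite direct sum of nonzero submodules. -/
def NoInfiniteIndepFamily (R : Type*) (M : Type*) [Ring R] [AddCommGroup M] [Module R M] : Prop :=
  ¬ ∃ f : ℕ → Submodule R M, (∀ i, f i ≠ ⊥) ∧ iSupIndep f

/-- A left Goldie ring: ACC on left annihilators and no infinite direct sums of nonzero
left ideals. -/
def IsLeftGoldie (R : Type*) [Ring R] : Prop :=
  ACCLeftAnnihilators R ∧ NoInfiniteIndepFamily R R

/-- The subquotient `n^i/n^{i+1}` of `R` determined by the prime radical `n`. -/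
abbrev grPiece (R : Type*) [Ring R] (i : ℕ) :=
  ↥(primeRadical R ^ i) ⧸
    (Submodule.comap (primeRadical R ^ i : Ideal R).subtype (primeRadical R ^ (i + 1)))

/-- The class of `x ∈ n^i` in `n^i/n^{i+1}`. -/
def grMk {R : Type*} [Ring R] (i : ℕ) (x : R) (hx : x ∈ primeRadical R ^ i) : grPiece R i :=
  Submodule.Quotient.mk ⟨x, hx⟩

/-- The `C̄`-torsion submodule `τ_i` of `n^i/n^{i+1}` (take the span, which coincides with the
set of torsion elements whenever the latter is a submodule, e.g. when `C̄` is a left Ore set);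
here `C̄` is represented through `π : R → R̄` as `{c : R | IsRegElem (π c)}`. -/
def tauSub {R : Type u} {Rbar : Type v} [Ring R] [Ring Rbar] (π : R →+* Rbar) (i : ℕ) :
    Submodule R (grPiece R i) :=
  Submodule.span R {u : grPiece R i | ∃ c : R, IsRegElem (π c) ∧ c • u = 0}

/-- The `C̄`-torsionfree module `f_i = (n^i/n^{i+1})/τ_i`. -/
abbrev fMod {R : Type u} {Rbar : Type v} [Ring R] [Ring Rbar] (π : R →+* Rbar) (i : ℕ) :=
  grPiece R i ⧸ tauSub π i

/-- The class of `x ∈ n^i` in `f_i`. -/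
def fMk {R : Type u} {Rbar : Type v} [Ring R] [Ring Rbar] (π : R →+* Rbar) (i : ℕ) (x : R)
    (hx : x ∈ primeRadical R ^ i) : fMod π i :=
  Submodule.Quotient.mk (grMk i x hx)

/-- The subset `C⁻¹K = {(φ c)⁻¹ (φ a) : c ∈ C, a ∈ K}` of a left quotient ring. -/
def locSet {R : Type u} {Q : Type v} [Ring R] [Ring Q] (φ : R →+* Q) (K : Ideal R) : Set Q :=
  {q : Q | ∃ c a : R, IsRegElem c ∧ a ∈ K ∧ φ c * q = φ a}

/-- A subset of a ring is a left Ore set (multiplicatively closed and satisfying the left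
Ore condition). -/
def IsLeftOreSubset {A : Type*} [Ring A] (S : Set A) : Prop :=
  (1 : A) ∈ S ∧ (∀ s ∈ S, ∀ t ∈ S, s * t ∈ S) ∧
    ∀ s ∈ S, ∀ a : A, ∃ t ∈ S, ∃ b : A, t * a = b * s

/-- A left denominator set. -/
def IsLeftDenominatorSet {A : Type*} [Ring A] (S : Set A) : Prop :=
  IsLeftOreSubset S ∧ ∀ a : A, ∀ s ∈ S, a * s = 0 → ∃ t ∈ S, t * a = 0

/-- A sequence of elements outside `T` whose cyclic submodules are independent modulo `T`. -/
def IsRelIndepSeq {R M : Type*} [Ring R] [AddCommGroup M] [Module R M] (T : Submodule R M)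
    (x : ℕ → M) : Prop :=
  (∀ k, x k ∉ T) ∧
    ∀ (N : ℕ) (r : ℕ → R), ∑ k ∈ Finset.range N, r k • x k ∈ T → ∀ k < N, r k • x k ∈ T

section Independence

variable {R M : Type*} [Ring R] [AddCommGroup M] [Module R M]

theorem noInfiniteIndepFamily_iff :
    NoInfiniteIndepFamily R M ↔ ∀ x : ℕ → M, ¬ IsRelIndepSeq (⊥ : Submodule R M) x := by
  classical
  constructor
  · rintro h x ⟨hx0, hx⟩
    refine h ⟨fun k => Submodule.span R {x k}, fun k hk => hx0 k ?_, ?_⟩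
    · simpa using hk
    · rw [iSupIndep_iff_finsetSum_eq_zero_imp_eq_zero]
      intro s v hv hsum i hi
      have : ∀ k : ℕ, ∃ r : R, (k ∈ s → r • x k = v k) ∧ (k ∉ s → r • x k = 0) := by
        intro k
        by_cases hk : k ∈ s
        · obtain ⟨r, hr⟩ := Submodule.mem_span_singleton.1 (hv k hk)
          exact ⟨r, fun _ => hr, fun h => absurd hk h⟩
        · exact ⟨0, fun h => absurd h hk, fun _ => zero_smul _ _⟩
      choose r hr1 hr2 using this
      have hlt : ∀ k ∈ s, k < s.sup id + 1 := fun k hk =>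
        Nat.lt_succ_of_le (Finset.le_sup (f := id) hk)
      have key := hx (s.sup id + 1) r ?_ i (hlt i hi)
      · rw [← hr1 i hi]; simpa using key
      · rw [Submodule.mem_bot, ← hsum]
        rw [← Finset.sum_subset (s₁ := s)]
        · exact Finset.sum_congr rfl fun k hk => hr1 k hk
        · intro k hk; exact Finset.mem_range.2 (hlt k hk)
        · intro k _ hk; exact hr2 k hk
  · rintro h ⟨f, hf0, hf⟩
    rw [iSupIndep_iff_finsetSum_eq_zero_imp_eq_zero] at hf
    have : ∀ k, ∃ y ∈ f k, y ≠ 0 := fun k => (Submodule.ne_bot_iff _).1 (hf0 k)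
    choose y hy hy0 using this
    refine h y ⟨fun k hk => hy0 k (by simpa using hk), fun N r hr k hk => ?_⟩
    rw [Submodule.mem_bot]
    exact hf (Finset.range N) (fun k => r k • y k) (fun i _ => (f i).smul_mem _ (hy i))
      (by simpa using hr) k (Finset.mem_range.2 hk)

theorem isRelIndepSeq_comap_iff {M' : Type*} [AddCommGroup M'] [Module R M'] (f : M →ₗ[R] M')
    {T : Submodule R M'} {x : ℕ → M} :
    IsRelIndepSeq (T.comap f) x ↔ IsRelIndepSeq T (fun k => f (x k)) := by
  simp [IsRelIndepSeq, map_sum]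

theorem isRelIndepSeq_mkQ_iff {T : Submodule R M} {x : ℕ → M} :
    IsRelIndepSeq (⊥ : Submodule R (M ⧸ T)) (fun k => T.mkQ (x k)) ↔ IsRelIndepSeq T x := by
  rw [← isRelIndepSeq_comap_iff, Submodule.comap_bot, Submodule.ker_mkQ]

theorem IsRelIndepSeq.congr {K T T' : Submodule R M} {x : ℕ → M} (hx : IsRelIndepSeq T x)
    (hxK : ∀ k, x k ∈ K) (hT : ∀ m ∈ K, m ∈ T ↔ m ∈ T') : IsRelIndepSeq T' x :=
  ⟨fun k h => hx.1 k ((hT _ (hxK k)).2 h), fun N r hr k hk =>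
    (hT _ (K.smul_mem _ (hxK k))).1 (hx.2 N r
      ((hT _ (K.sum_mem fun j _ => K.smul_mem _ (hxK j))).2 hr) k hk)⟩

theorem not_isRelIndepSeq_of_isNoetherian [IsNoetherian R M] (T : Submodule R M) (x : ℕ → M) :
    ¬ IsRelIndepSeq T x := by
  rw [← isRelIndepSeq_mkQ_iff]
  refine noInfiniteIndepFamily_iff.1 ?_ _
  rintro ⟨f, hf0, hf⟩
  have := Submodule.finite_ne_bot_of_iSupIndep hf
  simp only [ne_eq, hf0, not_false_eq_true, Set.ofPred_true] at this
  exact Set.infinite_univ this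

/-- If no sequence is independent modulo `T`, the image of an endomorphism that is injective
modulo `T` is essential modulo `T`; here the endomorphism is only given on a submodule `K`. -/
theorem exists_smul_mem_map_of_no_relIndepSeq (K T : Submodule R M) (f : M →ₗ[R] M)
    (hfK : ∀ m ∈ K, f m ∈ K) (hfT : ∀ m ∈ K, f m ∈ T ↔ m ∈ T)
    (hind : ∀ x : ℕ → M, (∀ k, x k ∈ K) → ¬ IsRelIndepSeq T x) {m : M} (hmK : m ∈ K)
    (hm : m ∉ T) : ∃ r : R, r • m ∉ T ∧ ∃ y ∈ K, r • m - f y ∈ T := by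
  by_contra! hcon
  have hpow : ∀ k, (f ^ k) m ∈ K := by
    intro k
    induction k with
    | zero => simpa using hmK
    | succ k ih => rw [pow_succ']; exact hfK _ ih
  refine hind (fun k => (f ^ k) m) hpow ⟨fun k => ?_, ?_⟩
  · induction k with
    | zero => simpa using hm
    | succ k ih =>
      beta_reduce at ih ⊢
      rw [pow_succ']
      exact fun h => ih ((hfT _ (hpow k)).1 h)
  · intro N
    induction N with
    | zero => intro r _ k hk; omega
    | succ N ih =>
      intro r hr
      have hsum : ∑ k ∈ Finset.range (N + 1), r k • (f ^ k) m =
          r 0 • m + f (∑ k ∈ Finset.range N, r (k + 1) • (f ^ k) m) := by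
        rw [Finset.sum_range_succ', map_sum, add_comm]
        simp [pow_succ']
      have hyK : ∑ k ∈ Finset.range N, r (k + 1) • (f ^ k) m ∈ K :=
        K.sum_mem fun k _ => K.smul_mem _ (hpow k)
      beta_reduce at hr
      rw [hsum] at hr
      have h0 : r 0 • m ∈ T := by
        by_contra h0
        refine hcon (r 0) h0 _ (K.neg_mem hyK) ?_
        rwa [map_neg, sub_neg_eq_add]
      have h1 := (hfT _ hyK).1 ((T.add_mem_iff_right h0).1 hr)
      intro k hk
      rcases k with _ | k
      · simpa using h0
      · have hT := ih (fun k => r (k + 1)) h1 k (by omega)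
        have := (hfT _ (K.smul_mem _ (hpow k))).2 hT
        rwa [map_smul, ← Module.End.mul_apply, ← pow_succ'] at this

end Independence

section Goldie

variable {A : Type*} [Ring A]

theorem exists_maximal_leftAnnihilator (hacc : ACCLeftAnnihilators A) {X : Set A}
    (hX : X.Nonempty) :
    ∃ a ∈ X, ∀ b ∈ X, (∀ r, r * a = 0 → r * b = 0) → ∀ r, r * b = 0 → r * a = 0 := by
  by_contra! hcon
  obtain ⟨a₀, ha₀⟩ := hX
  choose g hgX hg r hrb hra using hcon
  let G : X → X := fun a => ⟨g a a.2, hgX a a.2⟩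
  let u : ℕ → X := fun n => G^[n] ⟨a₀, ha₀⟩
  have hu : ∀ n, u (n + 1) = G (u n) := fun n => Function.iterate_succ_apply' G n _
  obtain ⟨N, hN⟩ := hacc (fun n => {r | r * (u n : A) = 0})
    (fun n => ⟨{(u n : A)}, by simp⟩) (fun i j hij => by
      induction hij with
      | refl => exact subset_rfl
      | step _ ih =>
        refine ih.trans fun s hs => ?_
        simp only [Set.mem_ofPred_eq, Nat.succ_eq_add_one, hu]
        exact hg _ _ s hs)
  have h1 : r (u N) (u N).2 ∈ {r | r * (u (N + 1) : A) = 0} := by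
    rw [Set.mem_ofPred_eq, hu]; exact hrb _ _
  rw [hN (N + 1) (Nat.le_succ N)] at h1
  exact hra _ _ h1

/-- In a semiprime ring with ACC on left annihilators the left singular ideal vanishes. -/
theorem eq_zero_of_essential_leftAnnihilator (hsp : ∀ a : A, (∀ r, a * r * a = 0) → a = 0)
    (hacc : ACCLeftAnnihilators A) {z : A}
    (hz : ∀ a : A, a ≠ 0 → ∃ r, r * a ≠ 0 ∧ r * a * z = 0) : z = 0 := by
  by_contra hz0
  obtain ⟨a, ⟨ha0, ha⟩, hmax⟩ := exists_maximal_leftAnnihilator hacc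
    (X := {z : A | z ≠ 0 ∧ ∀ a : A, a ≠ 0 → ∃ r, r * a ≠ 0 ∧ r * a * z = 0}) ⟨z, hz0, hz⟩
  obtain ⟨x, hx⟩ : ∃ x, a * x * a ≠ 0 := by
    by_contra! h
    exact ha0 (hsp a h)
  have hmem : ∀ r, r * (a * x * a) = 0 → r * a = 0 := by
    refine hmax _ ⟨hx, fun b hb => ?_⟩ fun r hr => ?_
    · obtain ⟨r, hr, hr'⟩ := ha b hb
      exact ⟨r, hr, by rw [mul_assoc a, ← mul_assoc, hr', zero_mul]⟩
    · rw [mul_assoc a, ← mul_assoc, hr, zero_mul]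
  obtain ⟨r, hr, hr'⟩ := ha (a * x) fun h => hx (by rw [h, zero_mul])
  exact hr (by rw [← mul_assoc, hmem r (by rw [← mul_assoc, hr']), zero_mul])

/-- In a semiprime ring with ACC on left annihilators every nonzero left ideal contains a
nonzero element with the same left annihilator as its square. -/
theorem exists_leftAnnihilator_sq_eq (hsp : ∀ a : A, (∀ r, a * r * a = 0) → a = 0)
    (hacc : ACCLeftAnnihilators A) {L : Ideal A} (hL : L ≠ ⊥) :
    ∃ a ∈ L, a ≠ 0 ∧ ∀ r, r * (a * a) = 0 → r * a = 0 := by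
  have hnil : ∃ a ∈ L, ¬ IsNilpotent a := by
    by_contra! hnil
    obtain ⟨a, haL, ha0⟩ := (Submodule.ne_bot_iff _).1 hL
    obtain ⟨b, ⟨hb0, y, rfl⟩, hmax⟩ := exists_maximal_leftAnnihilator hacc
      (X := {b : A | b ≠ 0 ∧ ∃ x, b = a * x}) ⟨a, ha0, 1, by simp⟩
    refine hb0 (hsp _ fun x => ?_)
    have hn : IsNilpotent (a * y * x) := by
      obtain ⟨n, hn⟩ := hnil (y * x * a) (L.mul_mem_left _ haL)
      refine ⟨n + 1, ?_⟩
      have : ∀ n, (a * (y * x)) ^ (n + 1) = a * (y * x * a) ^ n * (y * x) := by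
        intro n
        induction n with
        | zero => simp
        | succ n ih => rw [pow_succ, ih, pow_succ (y * x * a)]; simp only [mul_assoc]
      rw [mul_assoc a, this, hn, mul_zero, zero_mul]
    by_cases h0 : a * y * x = 0
    · rw [h0, zero_mul]
    obtain ⟨k, hk, hk'⟩ : ∃ k, (a * y * x) ^ (k + 1) ≠ 0 ∧ (a * y * x) ^ (k + 2) = 0 := by
      classical
      have hfind := Nat.find_spec hn
      have h2 : 2 ≤ Nat.find hn := by
        by_contra! hlt
        have : Nat.find hn = 0 ∨ Nat.find hn = 1 := by omega
        rcases this with h | h <;> rw [h] at hfind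
        · rw [pow_zero] at hfind
          exact h0 (by rw [← mul_one (a * y * x), hfind, mul_zero])
        · exact h0 (by simpa using hfind)
      refine ⟨Nat.find hn - 2, Nat.find_min hn (by omega), ?_⟩
      rwa [Nat.sub_add_cancel h2]
    refine hmax ((a * y * x) ^ (k + 1)) ⟨hk, y * x * (a * y * x) ^ k, ?_⟩ (fun r hr => ?_) _ ?_
    · rw [pow_succ']; simp only [mul_assoc]
    · rw [pow_succ', mul_assoc (a * y), ← mul_assoc, hr, zero_mul]
    · rw [← pow_succ', hk']
  obtain ⟨a, haL, ha⟩ := hnil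
  obtain ⟨N, hN⟩ := hacc (fun n => {r | r * a ^ n = 0}) (fun n => ⟨{a ^ n}, by simp⟩)
    (fun i j hij r hr => by
      obtain ⟨k, rfl⟩ := Nat.exists_eq_add_of_le hij
      simp only [Set.mem_ofPred_eq] at hr ⊢
      rw [pow_add, ← mul_assoc, hr, zero_mul])
  refine ⟨a ^ (N + 1), ?_, fun h => ha ⟨_, h⟩, fun r hr => ?_⟩
  · rw [pow_succ]; exact L.mul_mem_left _ haL
  · have h1 : r ∈ {r | r * a ^ (N + 1 + (N + 1)) = 0} := by rwa [Set.mem_ofPred_eq, pow_add]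
    rw [hN _ (by omega), ← hN (N + 1) (by omega)] at h1
    exact h1

/-- In a semiprime left Goldie ring every essential left ideal contains an element with zero
left annihilator. -/
theorem exists_leftAnnihilator_eq_zero_of_essential
    (hsp : ∀ a : A, (∀ r, a * r * a = 0) → a = 0) (hA : IsLeftGoldie A) {I : Ideal A}
    (hI : ∀ a : A, a ≠ 0 → ∃ r, r * a ≠ 0 ∧ r * a ∈ I) :
    ∃ c ∈ I, ∀ r, r * c = 0 → r = 0 := by
  obtain ⟨hacc, hind⟩ := hA
  by_contra! hcon
  let S : Set A := {c | c ∈ I ∧ ∀ r, r * (c * c) = 0 → r * c = 0}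
  have step : ∀ c : S, ∃ c' : S, (c' - c : A) ≠ 0 ∧ (c' - c : A) * c = 0 ∧
      (∀ r, r * ((c' - c : A) * (c' - c)) = 0 → r * (c' - c : A) = 0) ∧
      ∀ r, r * (c' : A) = 0 → r * (c : A) = 0 := by
    rintro ⟨c, hcI, hc⟩
    obtain ⟨s, hsc, hs0⟩ := hcon c hcI
    obtain ⟨r, hrs, hrsI⟩ := hI s hs0
    let L : Ideal A := I ⊓ LinearMap.ker (LinearMap.toSpanSingleton A A c)
    have hL : ∀ x, x ∈ L ↔ x ∈ I ∧ x * c = 0 := fun x => by simp [L]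
    obtain ⟨a, haL, ha0, ha⟩ := exists_leftAnnihilator_sq_eq hsp hacc (L := L)
      ((Submodule.ne_bot_iff _).2
        ⟨r * s, (hL _).2 ⟨hrsI, by rw [mul_assoc, hsc, mul_zero]⟩, hrs⟩)
    obtain ⟨haI, hac⟩ := (hL a).1 haL
    have hmono : ∀ r, r * (c + a) = 0 → r * c = 0 := by
      intro r hr
      refine hc r ?_
      have := congrArg (· * c) hr
      simpa [mul_assoc, add_mul, hac] using this
    have hsq : ∀ r, r * ((c + a) * (c + a)) = 0 → r * (c + a) = 0 := by
      intro r hr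
      have h1 : r * c = 0 := by
        have h : r * c * (c * c) = 0 := by
          have := congrArg (· * c) hr
          simpa [mul_assoc, add_mul, mul_add, hac] using this
        exact hc r (by rw [← mul_assoc]; exact hc (r * c) h)
      have h2 : r * a = 0 := by
        refine ha r ?_
        have h3 : r * ((c + a) * (c + a)) = r * c * (c + a) + r * (a * c) + r * (a * a) := by
          noncomm_ring
        rw [h3, h1, hac] at hr
        simpa using hr
      rw [mul_add, h1, h2, add_zero]
    refine ⟨⟨c + a, I.add_mem hcI haI, hsq⟩, ?_⟩
    simp only [add_sub_cancel_left]
    exact ⟨ha0, hac, ha, hmono⟩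
  choose G hG0 hGc hGsq hGmono using step
  let u : ℕ → S := fun n => G^[n] ⟨0, I.zero_mem, by simp⟩
  have hu : ∀ n, u (n + 1) = G (u n) := fun n => Function.iterate_succ_apply' G n _
  let a : ℕ → A := fun n => G (u n) - u n
  have hua : ∀ n (r : A), r * (u (n + 1) : A) = 0 → r * (u n : A) = 0 := fun n r h => by
    rw [hu] at h; exact hGmono _ r h
  have hua' : ∀ i j, i ≤ j → ∀ r : A, r * (u j : A) = 0 → r * (u i : A) = 0 := by
    intro i j hij
    induction hij with
    | refl => exact fun r h => h
    | step _ ih => exact fun r h => ih r (hua _ r h)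
  have haa : ∀ i j, i < j → a j * a i = 0 := by
    intro i j hij
    have h1 : a j * (u j : A) = 0 := hGc (u j)
    have h2 := hua' (i + 1) j hij _ h1
    have h3 := hua' i j hij.le _ h1
    rw [hu] at h2
    change a j * (G (u i) - u i : A) = 0
    rw [mul_sub, h2, h3, sub_zero]
  refine noInfiniteIndepFamily_iff.1 hind a ⟨fun k hk => hG0 (u k) (by simpa using hk), ?_⟩
  intro N r hsum k hk
  rw [Submodule.mem_bot] at hsum ⊢
  simp only [smul_eq_mul] at hsum ⊢
  induction k using Nat.strong_induction_on with
  | _ k ih =>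
    refine hGsq (u k) (r k) ?_
    have h := congrArg (· * a k) hsum
    simp only [zero_mul, Finset.sum_mul] at h
    rw [Finset.sum_eq_single k] at h
    · rw [← mul_assoc]; exact h
    · intro j hj hjk
      rcases lt_or_gt_of_ne hjk with hlt | hlt
      · rw [ih j hlt (by omega), zero_mul]
      · rw [mul_assoc, haa k j hlt, mul_zero]
    · intro h; exact absurd (Finset.mem_range.2 hk) h

/-- In a semiprime left Goldie ring an element with zero left annihilator is regular. -/
theorem isRegElem_of_leftAnnihilator_eq_zero
    (hsp : ∀ a : A, (∀ r, a * r * a = 0) → a = 0) (hA : IsLeftGoldie A) {c : A}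
    (hc : ∀ r, r * c = 0 → r = 0) : IsRegElem c := by
  refine ⟨fun x hx => ?_, hc⟩
  refine eq_zero_of_essential_leftAnnihilator hsp hA.1 fun a ha => ?_
  obtain ⟨r, hr, y, -, hy⟩ := exists_smul_mem_map_of_no_relIndepSeq ⊤ ⊥
    (LinearMap.toSpanSingleton A A c) (fun _ _ => trivial)
    (fun m _ => ⟨fun h => hc m (by simpa using h), fun h => by simp_all⟩)
    (fun x _ => noInfiniteIndepFamily_iff.1 hA.2 x) (m := a) trivial (by simpa using ha)
  refine ⟨r, by simpa using hr, ?_⟩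
  have : r * a = y * c := by simpa [sub_eq_zero] using hy
  rw [this, mul_assoc, hx, mul_zero]

/-- **Goldie's theorem**, first half: in a semiprime left Goldie ring every essential left ideal
contains a regular element. -/
theorem exists_isRegElem_mem_of_essential
    (hsp : ∀ a : A, (∀ r, a * r * a = 0) → a = 0) (hA : IsLeftGoldie A) {I : Ideal A}
    (hI : ∀ a : A, a ≠ 0 → ∃ r, r * a ≠ 0 ∧ r * a ∈ I) : ∃ c ∈ I, IsRegElem c := by
  obtain ⟨c, hcI, hc⟩ := exists_leftAnnihilator_eq_zero_of_essential hsp hA hI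
  exact ⟨c, hcI, isRegElem_of_leftAnnihilator_eq_zero hsp hA hc⟩

end Goldie

section PrimeRadical

variable {R : Type*} [Ring R]

instance : (primeRadical R).IsTwoSided where
  mul_mem_of_left {a} b ha := by
    rw [primeRadical, Submodule.mem_sInf] at ha ⊢
    exact fun P hP => hP.2.1 a (ha P hP) b

theorem Ideal.IsPrimeNC.le_of_pow_le {P I : Ideal R} (hP : P.IsPrimeNC) {k : ℕ}
    (hk : I ^ k ≤ P) : I ≤ P := by
  induction k with
  | zero => rw [Submodule.pow_zero, Ideal.one_eq_top, top_le_iff] at hk; exact absurd hk hP.1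
  | succ k ih =>
    by_contra hI
    obtain ⟨b, hbI, hb⟩ := SetLike.not_le_iff_exists.1 hI
    refine hI (ih fun a ha => ?_)
    refine (hP.2.2 a b fun r => hk ?_).resolve_right hb
    rw [Submodule.pow_succ, mul_assoc]
    exact Ideal.mul_mem_mul ha (I.mul_mem_left r hbI)

theorem le_primeRadical_of_pow_eq_bot {I : Ideal R} {k : ℕ} (hk : I ^ k = ⊥) :
    I ≤ primeRadical R :=
  le_sInf fun _ hP => Ideal.IsPrimeNC.le_of_pow_le hP (hk.le.trans bot_le)

/-- The largest two-sided ideal contained in a maximal left ideal is prime. -/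
theorem primeRadical_le_jacobson : primeRadical R ≤ Ring.jacobson R := by
  rw [← Ideal.jacobson_bot, Ideal.jacobson]
  refine le_sInf fun M hM a ha => ?_
  obtain ⟨-, hM⟩ := hM
  let P : Ideal R :=
    { carrier := {a | ∀ q, a * q ∈ M}
      add_mem' := fun ha hb q => by rw [add_mul]; exact M.add_mem (ha q) (hb q)
      zero_mem' := fun q => by simp
      smul_mem' := fun r a ha q => by
        rw [smul_eq_mul, mul_assoc]; exact M.mul_mem_left r (ha q) }
  have hP : P.IsPrimeNC := by
    refine ⟨fun h => ?_, fun a ha r q => by rw [mul_assoc]; exact ha _, fun a b hab => ?_⟩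
    · have h1 : (1 : R) ∈ P := h ▸ trivial
      exact hM.ne_top ((Ideal.eq_top_iff_one M).2 (by simpa using h1 1))
    · rw [or_iff_not_imp_right]
      intro hb q
      obtain ⟨q₀, hq₀⟩ : ∃ q, b * q ∉ M := by
        by_contra! h
        exact hb h
      obtain ⟨r, i, hi, hr⟩ := hM.exists_inv hq₀
      have h1 : a * q = a * (q * r) * b * q₀ + a * q * (1 - r * (b * q₀)) := by noncomm_ring
      rw [h1]
      refine M.add_mem (hab (q * r) q₀) (M.mul_mem_left _ ?_)
      rwa [← hr, add_sub_cancel_left]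
  have : a ∈ P := (sInf_le (show P ∈ {P : Ideal R | P.IsPrimeNC} from hP)) ha
  simpa using this 1

theorem exists_primeRadical_pow_eq_bot_of_isArtinianRing [IsArtinianRing R] :
    ∃ k, primeRadical R ^ (k + 1) = ⊥ := by
  obtain ⟨k, hk⟩ := IsSemiprimaryRing.isNilpotent (R := R)
  have heq : primeRadical R = Ring.jacobson R :=
    primeRadical_le_jacobson.antisymm (le_primeRadical_of_pow_eq_bot hk)
  refine ⟨k, ?_⟩
  rw [heq, Ideal.IsTwoSided.pow_succ, hk, Submodule.zero_eq_bot, Ideal.mul_bot]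

theorem isUnit_of_isArtinianRing [IsArtinianRing R] {c : R} (hc : ∀ q, q * c = 0 → q = 0) :
    IsUnit c := by
  have hinv : ∀ c : R, (∀ q, q * c = 0 → q = 0) → ∃ y, y * c = 1 := by
    intro c hc
    obtain ⟨y, hy⟩ := IsArtinian.surjective_of_injective_endomorphism
      (LinearMap.toSpanSingleton R R c)
      ((injective_iff_map_eq_zero _).2 fun q hq => hc q (by simpa using hq)) 1
    exact ⟨y, by simpa using hy⟩
  obtain ⟨y, hy⟩ := hinv c hc
  obtain ⟨z, hz⟩ := hinv y fun q hq => by rw [← mul_one q, ← hy, ← mul_assoc, hq, zero_mul]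
  have hzc : z = c := by rw [← mul_one z, ← hy, ← mul_assoc, hz, one_mul]
  exact ⟨⟨c, y, hzc ▸ hz, hy⟩, rfl⟩

end PrimeRadical

/-- `φ : R → Q` inverts `S` and every element of `Q` is a left fraction with denominator in `S`. -/
structure IsLeftFractionMap {R Q : Type*} [Ring R] [Ring Q] (S : Submonoid R) (φ : R →+* Q) :
    Prop where
  inj : Function.Injective φ
  isUnit : ∀ s ∈ S, IsUnit (φ s)
  denom : ∀ q : Q, ∃ s ∈ S, ∃ r : R, φ s * q = φ r

theorem isRegElem_iff_mem_nonZeroDivisors {R : Type*} [Ring R] {c : R} :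
    IsRegElem c ↔ c ∈ nonZeroDivisors R :=
  mem_nonZeroDivisors_iff.symm

theorem IsRegElem.mul {R : Type*} [Ring R] {c d : R} (hc : IsRegElem c) (hd : IsRegElem d) :
    IsRegElem (c * d) := by
  rw [isRegElem_iff_mem_nonZeroDivisors] at *
  exact mul_mem hc hd

theorem IsLeftQuotRing.isLeftFractionMap {R Q : Type*} [Ring R] [Ring Q] {φ : R →+* Q}
    (h : IsLeftQuotRing φ) : IsLeftFractionMap (nonZeroDivisors R) φ where
  inj := h.inj
  isUnit s hs := h.isUnit s (isRegElem_iff_mem_nonZeroDivisors.2 hs)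
  denom q := by
    obtain ⟨c, r, hc, hq⟩ := h.denom q
    exact ⟨c, isRegElem_iff_mem_nonZeroDivisors.1 hc, r, hq⟩

theorem IsRegElem.of_injective {R Q : Type*} [Ring R] [Ring Q] {φ : R →+* Q}
    (hφ : Function.Injective φ) {c : R} (hc : IsUnit (φ c)) : IsRegElem c := by
  refine ⟨fun x hx => hφ ?_, fun x hx => hφ ?_⟩
  · rw [map_zero, ← hc.mul_right_eq_zero, ← map_mul, hx, map_zero]
  · rw [map_zero, ← hc.mul_left_eq_zero, ← map_mul, hx, map_zero]

theorem IsUnit.mul_mem_ideal_iff {Q : Type*} [Ring Q] {u : Q} (hu : IsUnit u) {J : Ideal Q}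
    {q : Q} : u * q ∈ J ↔ q ∈ J := by
  refine ⟨fun h => ?_, J.mul_mem_left u⟩
  obtain ⟨u, rfl⟩ := hu
  simpa using J.mul_mem_left (↑u⁻¹ : Q) h

namespace IsLeftFractionMap

variable {R Q : Type*} [Ring R] [Ring Q] {S : Submonoid R} {φ : R →+* Q}

theorem exists_ore (h : IsLeftFractionMap S φ) (a : R) {s : R} (hs : s ∈ S) :
    ∃ t ∈ S, ∃ b : R, t * a = b * s := by
  obtain ⟨u, hu⟩ := h.isUnit s hs
  obtain ⟨t, ht, b, hb⟩ := h.denom (φ a * (↑u⁻¹ : Q))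
  refine ⟨t, ht, b, h.inj ?_⟩
  rw [map_mul, map_mul, ← hb, ← hu, mul_assoc, mul_assoc, Units.inv_mul, mul_one]

theorem mem_map_iff (h : IsLeftFractionMap S φ) {I : Ideal R} {q : Q} :
    q ∈ I.map φ ↔ ∃ s ∈ S, ∃ a ∈ I, φ s * q = φ a := by
  constructor
  · intro hq
    induction hq using Submodule.span_induction with
    | mem x hx =>
      obtain ⟨a, ha, rfl⟩ := hx
      exact ⟨1, S.one_mem, a, ha, by simp⟩
    | zero => exact ⟨1, S.one_mem, 0, I.zero_mem, by simp⟩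
    | add x y _ _ hx hy =>
      obtain ⟨s, hs, a, ha, hx⟩ := hx
      obtain ⟨s', hs', a', ha', hy⟩ := hy
      obtain ⟨t, ht, b, hb⟩ := h.exists_ore s hs'
      refine ⟨t * s, S.mul_mem ht hs, t * a + b * a',
        I.add_mem (I.mul_mem_left _ ha) (I.mul_mem_left _ ha'), ?_⟩
      rw [mul_add, map_add]
      congr 1
      · rw [map_mul, map_mul, mul_assoc, hx]
      · rw [hb, map_mul, map_mul, mul_assoc, hy]
    | smul q x _ hx =>
      obtain ⟨s, hs, a, ha, hx⟩ := hx
      obtain ⟨u, hu⟩ := h.isUnit s hs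
      obtain ⟨t, ht, b, hb⟩ := h.denom (q * (↑u⁻¹ : Q))
      refine ⟨t, ht, b * a, I.mul_mem_left _ ha, ?_⟩
      rw [map_mul, ← hb, ← hx, ← hu, smul_eq_mul]
      simp [mul_assoc]
  · rintro ⟨s, hs, a, ha, hq⟩
    rw [← (h.isUnit s hs).mul_mem_ideal_iff, hq]
    exact Ideal.mem_map_of_mem φ ha

theorem mem_comap_map_iff (h : IsLeftFractionMap S φ) {I : Ideal R} {x : R} :
    x ∈ (I.map φ).comap φ ↔ ∃ s ∈ S, s * x ∈ I := by
  rw [Ideal.mem_comap, h.mem_map_iff]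
  constructor
  · rintro ⟨s, hs, a, ha, hx⟩
    rw [← map_mul] at hx
    exact ⟨s, hs, h.inj hx ▸ ha⟩
  · rintro ⟨s, hs, hx⟩
    exact ⟨s, hs, _, hx, (map_mul φ s x).symm⟩

theorem exists_common_denom (h : IsLeftFractionMap S φ) (q : ℕ → Q) (N : ℕ) :
    ∃ s ∈ S, ∃ r : ℕ → R, ∀ k < N, φ s * q k = φ (r k) := by
  induction N with
  | zero => exact ⟨1, S.one_mem, 0, fun k hk => absurd hk (Nat.not_lt_zero k)⟩
  | succ N ih =>
    obtain ⟨s, hs, r, hr⟩ := ih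
    obtain ⟨t, ht, b, hb⟩ := h.denom (φ s * q N)
    refine ⟨t * s, S.mul_mem ht hs, fun k => if k = N then b else t * r k, fun k hk => ?_⟩
    rw [map_mul, mul_assoc]
    beta_reduce
    split_ifs with hkN
    · rw [hkN, hb]
    · rw [hr k (by omega), map_mul]

theorem isRelIndepSeq_map (h : IsLeftFractionMap S φ) {T : Ideal Q} {a : ℕ → R}
    (ha : IsRelIndepSeq (T.comap φ) a) : IsRelIndepSeq T (fun k => φ (a k)) := by
  refine ⟨ha.1, fun N q hq k hk => ?_⟩
  obtain ⟨s, hs, r, hr⟩ := h.exists_common_denom q N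
  have hmem : ∑ k ∈ Finset.range N, r k • a k ∈ T.comap φ := by
    rw [Ideal.mem_comap, map_sum]
    have : ∑ k ∈ Finset.range N, φ (r k • a k) =
        φ s * ∑ k ∈ Finset.range N, q k • φ (a k) := by
      rw [Finset.mul_sum]
      refine Finset.sum_congr rfl fun k hk => ?_
      rw [smul_eq_mul, smul_eq_mul, map_mul, ← hr k (Finset.mem_range.1 hk), mul_assoc]
    rw [this]
    exact T.mul_mem_left _ hq
  have := ha.2 N r hmem k hk
  rwa [Ideal.mem_comap, smul_eq_mul, map_mul, ← hr k hk, mul_assoc,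
    (h.isUnit s hs).mul_mem_ideal_iff] at this

theorem isRelIndepSeq_numerators (h : IsLeftFractionMap S φ) {T : Ideal Q} {q : ℕ → Q}
    (hq : IsRelIndepSeq T q) {s a : ℕ → R} (hs : ∀ k, s k ∈ S)
    (hsa : ∀ k, φ (s k) * q k = φ (a k)) : IsRelIndepSeq (T.comap φ) a := by
  refine ⟨fun k hk => hq.1 k ?_, fun N r hr k hk => ?_⟩
  · rwa [Ideal.mem_comap, ← hsa, (h.isUnit _ (hs k)).mul_mem_ideal_iff] at hk
  · have heq : ∀ k, φ (r k • a k) = (φ (r k) * φ (s k)) • q k := fun k => by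
      rw [smul_eq_mul, smul_eq_mul, map_mul, ← hsa, mul_assoc]
    rw [Ideal.mem_comap, map_sum] at hr
    simp only [heq] at hr
    rw [Ideal.mem_comap, heq]
    exact hq.2 N _ hr k hk

end IsLeftFractionMap

section Artinian

variable {Q M : Type*} [Ring Q] [AddCommGroup M] [Module Q M]

theorem isSemisimpleModule_of_essential_eq_top
    (hess : ∀ E : Submodule Q M, (∀ m, m ≠ 0 → ∃ q : Q, q • m ≠ 0 ∧ q • m ∈ E) → E = ⊤) :
    IsSemisimpleModule Q M := by
  refine { exists_isCompl := fun E => ?_ }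
  obtain ⟨F, -, hF⟩ := zorn_le_nonempty₀ {F : Submodule Q M | Disjoint E F}
    (fun c hc hchain y _ => ⟨sSup c, hchain.directedOn.disjoint_sSup_right.2 hc,
      fun z hz => le_sSup hz⟩) ⊥ disjoint_bot_right
  refine ⟨F, hF.prop, codisjoint_iff.2 (hess _ fun m hm => ?_)⟩
  by_contra! hcon
  have hdisj : Disjoint E (F ⊔ Submodule.span Q {m}) := by
    rw [Submodule.disjoint_def]
    intro e he he'
    obtain ⟨f, hf, y, hy, rfl⟩ := Submodule.mem_sup.1 he'
    obtain ⟨q, rfl⟩ := Submodule.mem_span_singleton.1 hy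
    have hqm : q • m = 0 := by
      by_contra h0
      refine hcon q h0 ?_
      have := (E ⊔ F).sub_mem (Submodule.mem_sup_left he) (Submodule.mem_sup_right hf)
      rwa [add_sub_cancel_left] at this
    rw [hqm, add_zero] at he ⊢
    exact Submodule.disjoint_def.1 hF.prop f he hf
  have hmF : m ∈ F := hF.le_of_ge hdisj le_sup_left
    (Submodule.mem_sup_right (Submodule.mem_span_singleton_self m))
  exact hcon 1 (by simpa using hm) (by simpa using Submodule.mem_sup_right hmF)

theorem isArtinian_of_noInfiniteIndepFamily [IsSemisimpleModule Q M]
    (h : NoInfiniteIndepFamily Q M) : IsArtinian Q M := by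
  obtain ⟨s, hind, htop, hsimple⟩ := IsSemisimpleModule.exists_sSupIndep_sSup_simples_eq_top Q M
  have hfin : s.Finite := by
    by_contra hinf
    let g := Set.Infinite.natEmbedding s hinf
    refine h ⟨fun k => g k, fun k hk => ?_, ((sSupIndep_iff s).1 hind).comp g.injective⟩
    exact (isSimpleModule_iff_isAtom.1 (hsimple _ (g k).2)).1 hk
  have htfae := (IsSemisimpleModule.finite_tfae (R := Q) (M := M)).out 4 2
  exact htfae.1 ⟨s, hfin, hind, htop, hsimple⟩

theorem isArtinianRing_of_filtration (J : ℕ → Ideal Q) (hanti : ∀ i, J (i + 1) ≤ J i)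
    (h0 : J 0 = ⊤) {k : ℕ} (hk : J k = ⊥)
    (hJ : ∀ i, IsArtinian Q (J i ⧸ Submodule.comap (J i).subtype (J (i + 1)))) :
    IsArtinianRing Q := by
  have key : ∀ j i, i + j = k → IsArtinian Q (J i) := by
    intro j
    induction j with
    | zero =>
      rintro i rfl
      rw [Nat.add_zero] at hk
      rw [hk]
      infer_instance
    | succ j ih =>
      intro i hi
      have := ih (i + 1) (by omega)
      rw [isArtinian_iff_submodule_quotient (Submodule.comap (J i).subtype (J (i + 1)))]
      exact ⟨isArtinian_of_linearEquiv (Submodule.comapSubtypeEquivOfLe (hanti i)).symm, hJ i⟩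
  have := key k 0 (by omega)
  rw [h0] at this
  exact isArtinian_of_linearEquiv Submodule.topEquiv

end Artinian

section Quotient

variable {R : Type u} {Rbar : Type v} [Ring R] [Ring Rbar] {π : R →+* Rbar}

theorem noInfiniteIndepFamily_self_iff_of_surjective (hπ : Function.Surjective π) :
    NoInfiniteIndepFamily Rbar Rbar ↔ ∀ x : ℕ → R, ¬ IsRelIndepSeq (RingHom.ker π) x := by
  rw [noInfiniteIndepFamily_iff]
  have key : ∀ x : ℕ → R, IsRelIndepSeq (⊥ : Ideal Rbar) (fun k => π (x k)) ↔
      IsRelIndepSeq (RingHom.ker π) x := by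
    intro x
    simp only [IsRelIndepSeq, Submodule.mem_bot, RingHom.mem_ker, map_sum, smul_eq_mul, map_mul]
    refine and_congr_right fun _ => ⟨fun h N r => h N fun k => π (r k), fun h N r => ?_⟩
    choose r' hr' using fun k => hπ (r k)
    simpa only [hr'] using h N r'
  refine ⟨fun h x hx => h _ ((key x).2 hx), fun h x hx => ?_⟩
  choose x' hx' using fun k => hπ (x k)
  exact h x' ((key x').1 (by simpa only [hx'] using hx))

/-- `T` cuts out the classes of `n^i/n^{i+1}` killed by some element of `C̄`. -/
def IsTorsionIdeal (π : R →+* Rbar) (i : ℕ) (T : Ideal R) : Prop :=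
  ∀ x ∈ primeRadical R ^ i,
    x ∈ T ↔ ∃ c : R, IsRegElem (π c) ∧ c * x ∈ primeRadical R ^ (i + 1)

namespace IsTorsionIdeal

variable {i : ℕ} {T : Ideal R}

theorem comap_mkQ_tauSub (hT : IsTorsionIdeal π i T) :
    (tauSub π i).comap
        (Submodule.comap (primeRadical R ^ i : Ideal R).subtype (primeRadical R ^ (i + 1))).mkQ =
      Submodule.comap (primeRadical R ^ i : Ideal R).subtype T := by
  have hsmul : ∀ (c : R) (y : ↥(primeRadical R ^ i)),
      c • (Submodule.Quotient.mk y : grPiece R i) = 0 ↔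
        c * (y : R) ∈ primeRadical R ^ (i + 1) := by
    intro c y
    rw [← Submodule.Quotient.mk_smul, Submodule.Quotient.mk_eq_zero]
    simp
  have hone : IsRegElem (π 1) := by simp [IsRegElem]
  apply le_antisymm
  · have hle : tauSub π i ≤ (Submodule.comap (primeRadical R ^ i : Ideal R).subtype T).map
        (Submodule.comap (primeRadical R ^ i : Ideal R).subtype
          (primeRadical R ^ (i + 1))).mkQ := by
      refine Submodule.span_le.2 ?_
      rintro u ⟨c, hc, hcu⟩
      obtain ⟨y, rfl⟩ := Submodule.Quotient.mk_surjective _ u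
      exact ⟨y, (hT y y.2).2 ⟨c, hc, (hsmul c y).1 hcu⟩, rfl⟩
    refine (Submodule.comap_mono hle).trans ?_
    rw [Submodule.comap_map_mkQ, sup_le_iff]
    refine ⟨fun y hy => (hT y y.2).2 ⟨1, hone, by simpa using hy⟩, le_rfl⟩
  · intro y hy
    obtain ⟨c, hc, hcy⟩ := (hT y y.2).1 hy
    exact Submodule.subset_span ⟨c, hc, (hsmul c y).2 hcy⟩

theorem fMk_eq_zero_iff (hT : IsTorsionIdeal π i T) {x : R} (hx : x ∈ primeRadical R ^ i) :
    fMk π i x hx = 0 ↔ x ∈ T := by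
  rw [fMk, Submodule.Quotient.mk_eq_zero]
  have := SetLike.ext_iff.1 hT.comap_mkQ_tauSub ⟨x, hx⟩
  exact this

theorem noInfiniteIndepFamily_fMod_iff (hT : IsTorsionIdeal π i T) :
    NoInfiniteIndepFamily R (fMod π i) ↔
      ∀ x : ℕ → R, (∀ k, x k ∈ primeRadical R ^ i) → ¬ IsRelIndepSeq T x := by
  let F : ↥(primeRadical R ^ i) →ₗ[R] fMod π i := (tauSub π i).mkQ ∘ₗ
    (Submodule.comap (primeRadical R ^ i : Ideal R).subtype (primeRadical R ^ (i + 1))).mkQ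
  have hF : Function.Surjective F :=
    (Submodule.mkQ_surjective _).comp (Submodule.mkQ_surjective _)
  have key : ∀ x : ℕ → ↥(primeRadical R ^ i),
      IsRelIndepSeq (⊥ : Submodule R (fMod π i)) (fun k => F (x k)) ↔
        IsRelIndepSeq T (fun k => (x k : R)) := by
    intro x
    rw [← isRelIndepSeq_comap_iff, Submodule.comap_comp, Submodule.comap_bot,
      Submodule.ker_mkQ, hT.comap_mkQ_tauSub, isRelIndepSeq_comap_iff]
    rfl
  rw [noInfiniteIndepFamily_iff]
  refine ⟨fun h x hx hxT => h _ ((key fun k => ⟨x k, hx k⟩).2 hxT), fun h x hx => ?_⟩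
  choose y hy using fun k => hF (x k)
  exact h (fun k => y k) (fun k => (y k).2) ((key y).1 (by simpa only [hy] using hx))

end IsTorsionIdeal

theorem isTorsionIdeal_zero (hπker : RingHom.ker π = primeRadical R) :
    IsTorsionIdeal π 0 (primeRadical R) := by
  intro x _
  rw [Submodule.pow_one]
  constructor
  · intro hx
    exact ⟨1, by simp [IsRegElem], by simpa using hx⟩
  · rintro ⟨c, hc, hcx⟩
    rw [← hπker, RingHom.mem_ker] at hcx ⊢
    exact hc.1 _ (by rw [← map_mul, hcx])

end Quotient

section Sufficiency

variable {R : Type u} {Rbar : Type v} [Ring R] [Ring Rbar] {π : R →+* Rbar}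

theorem semiprime_of_ker_eq_primeRadical (hπsurj : Function.Surjective π)
    (hπker : RingHom.ker π = primeRadical R) (a : Rbar) (ha : ∀ r, a * r * a = 0) : a = 0 := by
  obtain ⟨a, rfl⟩ := hπsurj a
  rw [← RingHom.mem_ker, hπker, primeRadical, Submodule.mem_sInf]
  intro P hP
  refine or_self_iff.1 (hP.2.2 a a fun r => ?_)
  have hn : a * r * a ∈ primeRadical R := by
    rw [← hπker, RingHom.mem_ker, map_mul, map_mul, ha]
  exact sInf_le (show P ∈ {P : Ideal R | P.IsPrimeNC} from hP) hn

theorem exists_isRegElem_map_mem (hπsurj : Function.Surjective π)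
    (hπker : RingHom.ker π = primeRadical R) (hA : IsLeftGoldie Rbar) {T I : Ideal R}
    (hnT : primeRadical R ≤ T) (hTI : T ≤ I)
    (hess : ∀ r, r ∉ T → ∃ r', r' * r ∉ T ∧ r' * r ∈ I) : ∃ c ∈ I, IsRegElem (π c) := by
  obtain ⟨c, hcI, hc⟩ := exists_isRegElem_mem_of_essential
    (semiprime_of_ker_eq_primeRadical hπsurj hπker) hA (I := I.map π) fun a ha => by
      obtain ⟨r, rfl⟩ := hπsurj a
      by_cases hr : r ∈ T
      · exact ⟨1, by simpa using ha, by simpa using Ideal.mem_map_of_mem π (hTI hr)⟩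
      · obtain ⟨r', hr', hrI⟩ := hess r hr
        refine ⟨π r', fun h => hr' (hnT ?_), ?_⟩
        · rwa [← hπker, RingHom.mem_ker, map_mul]
        · rw [← map_mul]; exact Ideal.mem_map_of_mem π hrI
  obtain ⟨c', hc'I, rfl⟩ := (Ideal.mem_map_iff_of_surjective π hπsurj).1 hcI
  exact ⟨c', hc'I, hc⟩

theorem exists_ore_of_isTorsionIdeal (hπsurj : Function.Surjective π)
    (hπker : RingHom.ker π = primeRadical R) (hA : IsLeftGoldie Rbar) {i : ℕ} {T : Ideal R}
    (hT : IsTorsionIdeal π i T) {s : R}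
    (hs : ∀ x ∈ primeRadical R ^ i, x * s ∈ T ↔ x ∈ T)
    (hind : ∀ x : ℕ → R, (∀ k, x k ∈ primeRadical R ^ i) → ¬ IsRelIndepSeq T x) {x : R}
    (hx : x ∈ primeRadical R ^ i) :
    ∃ t : R, IsRegElem (π t) ∧ ∃ y : R, t * x - y * s ∈ primeRadical R ^ (i + 1) := by
  have hmul : ∀ y ∈ primeRadical R ^ i, y * s ∈ primeRadical R ^ i :=
    fun y hy => Ideal.mul_mem_right s _ hy
  have hTI : ∀ {r}, r * x ∈ T → ∃ y ∈ primeRadical R ^ i, r * x - y * s ∈ T :=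
    fun h => ⟨0, Ideal.zero_mem _, by simpa using h⟩
  let I : Ideal R :=
    { carrier := {r | ∃ y ∈ primeRadical R ^ i, r * x - y * s ∈ T}
      add_mem' := by
        rintro a b ⟨y, hy, hyT⟩ ⟨z, hz, hzT⟩
        refine ⟨y + z, Ideal.add_mem _ hy hz, ?_⟩
        have : (a + b) * x - (y + z) * s = (a * x - y * s) + (b * x - z * s) := by noncomm_ring
        rw [this]; exact T.add_mem hyT hzT
      zero_mem' := hTI (by simp)
      smul_mem' := by
        rintro r a ⟨y, hy, hyT⟩
        refine ⟨r * y, Ideal.mul_mem_left _ r hy, ?_⟩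
        have : (r • a) * x - r * y * s = r * (a * x - y * s) := by
          rw [smul_eq_mul]; noncomm_ring
        rw [this]; exact T.mul_mem_left r hyT }
  obtain ⟨c, ⟨y, hy, hyT⟩, hc⟩ := exists_isRegElem_map_mem hπsurj hπker hA
    (T := Submodule.comap (LinearMap.toSpanSingleton R R x) T) (I := I)
    (fun a ha => by
      refine (hT _ (Ideal.mul_mem_left _ a hx)).2 ⟨1, by simp [IsRegElem], ?_⟩
      rw [one_mul, Ideal.IsTwoSided.pow_succ]
      exact Ideal.mul_mem_mul ha hx)
    (fun r hr => hTI hr)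
    (fun r hr => by
      obtain ⟨r', hr', y, hy, hyT⟩ := exists_smul_mem_map_of_no_relIndepSeq
        (primeRadical R ^ i) T (LinearMap.toSpanSingleton R R s) hmul hs hind
        (Ideal.mul_mem_left _ r hx) hr
      refine ⟨r', ?_, y, hy, ?_⟩
      · simpa [mul_assoc] using hr'
      · simpa [mul_assoc] using hyT)
  have hmem : c * x - y * s ∈ primeRadical R ^ i :=
    Ideal.sub_mem _ (Ideal.mul_mem_left _ c hx) (hmul y hy)
  obtain ⟨d, hd, hdT⟩ := (hT _ hmem).1 hyT
  refine ⟨d * c, ?_, d * y, ?_⟩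
  · rw [map_mul]
    exact hd.mul hc
  · convert hdT using 1
    noncomm_ring

theorem exists_isTorsionIdeal
    (hore : ∀ a s : R, IsRegElem (π s) →
      ∃ t : R, IsRegElem (π t) ∧ ∃ b : R, t * a - b * s ∈ primeRadical R) (i : ℕ) :
    ∃ T : Ideal R, IsTorsionIdeal π i T := by
  have hmul : ∀ a ∈ primeRadical R, ∀ x ∈ primeRadical R ^ i,
      a * x ∈ primeRadical R ^ (i + 1) := fun a ha x hx => by
    rw [Ideal.IsTwoSided.pow_succ]
    exact Ideal.mul_mem_mul ha hx
  let T : Ideal R :=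
    { carrier := {x | x ∈ primeRadical R ^ i ∧
        ∃ c : R, IsRegElem (π c) ∧ c * x ∈ primeRadical R ^ (i + 1)}
      add_mem' := by
        rintro x y ⟨hx, c, hc, hcx⟩ ⟨hy, d, hd, hdy⟩
        obtain ⟨t, ht, b, hb⟩ := hore c d hd
        refine ⟨Ideal.add_mem _ hx hy, t * c, by rw [map_mul]; exact ht.mul hc, ?_⟩
        have : t * c * (x + y) = t * (c * x) + (b * (d * y) + (t * c - b * d) * y) := by
          noncomm_ring
        rw [this]
        exact Ideal.add_mem _ (Ideal.mul_mem_left _ _ hcx)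
          (Ideal.add_mem _ (Ideal.mul_mem_left _ _ hdy) (hmul _ hb _ hy))
      zero_mem' := ⟨Ideal.zero_mem _, 1, by simp [IsRegElem], by simp⟩
      smul_mem' := by
        rintro r x ⟨hx, c, hc, hcx⟩
        obtain ⟨t, ht, b, hb⟩ := hore r c hc
        refine ⟨Ideal.mul_mem_left _ r hx, t, ht, ?_⟩
        have : t * (r • x) = b * (c * x) + (t * r - b * c) * x := by
          rw [smul_eq_mul]; noncomm_ring
        rw [this]
        exact Ideal.add_mem _ (Ideal.mul_mem_left _ _ hcx) (hmul _ hb _ hx) }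
  exact ⟨T, fun x hx => ⟨fun h => h.2, fun h => ⟨hx, h⟩⟩⟩

/-- An ideal `T` cutting out the torsion of `n^i/n^{i+1}` such that the torsionfree quotient has
no infinite direct sums and `C̄` acts injectively on it from the right. -/
structure IsGoodTorsionIdeal (π : R →+* Rbar) (i : ℕ) (T : Ideal R) : Prop where
  isTorsionIdeal : IsTorsionIdeal π i T
  mul_mem_iff : ∀ s : R, IsRegElem (π s) → ∀ x ∈ primeRadical R ^ i, x * s ∈ T ↔ x ∈ T
  not_isRelIndepSeq : ∀ x : ℕ → R, (∀ k, x k ∈ primeRadical R ^ i) → ¬ IsRelIndepSeq T x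

theorem isGoodTorsionIdeal_zero (hπsurj : Function.Surjective π)
    (hπker : RingHom.ker π = primeRadical R) (hA : IsLeftGoldie Rbar) :
    IsGoodTorsionIdeal π 0 (primeRadical R) where
  isTorsionIdeal := isTorsionIdeal_zero hπker
  mul_mem_iff s hs x _ := by
    rw [← hπker, RingHom.mem_ker, RingHom.mem_ker, map_mul]
    exact ⟨hs.2 _, fun h => by rw [h, zero_mul]⟩
  not_isRelIndepSeq x _ := by
    rw [← hπker]
    exact (noInfiniteIndepFamily_self_iff_of_surjective hπsurj).1 hA.2 x

theorem exists_isGoodTorsionIdeal (hπsurj : Function.Surjective π)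
    (hπker : RingHom.ker π = primeRadical R) (hA : IsLeftGoldie Rbar)
    (hind : ∀ i : ℕ, 1 ≤ i → primeRadical R ^ i ≠ ⊥ → NoInfiniteIndepFamily R (fMod π i))
    (hinj : ∀ i : ℕ, 1 ≤ i → primeRadical R ^ i ≠ ⊥ → ∀ c : R, IsRegElem (π c) →
      ∀ (x : R) (hx : x ∈ primeRadical R ^ i) (hxc : x * c ∈ primeRadical R ^ i),
        fMk π i (x * c) hxc = 0 → fMk π i x hx = 0) (i : ℕ) :
    ∃ T, IsGoodTorsionIdeal π i T := by
  have h0 := isGoodTorsionIdeal_zero hπsurj hπker hA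
  rcases Nat.eq_zero_or_pos i with rfl | hi
  · exact ⟨_, h0⟩
  obtain ⟨T, hT⟩ := exists_isTorsionIdeal (fun a s hs => by
    simpa only [zero_add, Submodule.pow_one] using exists_ore_of_isTorsionIdeal hπsurj hπker hA
      h0.isTorsionIdeal (h0.mul_mem_iff s hs) h0.not_isRelIndepSeq (x := a)
      (by rw [Submodule.pow_zero, Ideal.one_eq_top]; trivial)) i
  refine ⟨T, hT, fun s hs x hx => ?_, fun x hx => ?_⟩
  · have hxs : x * s ∈ primeRadical R ^ i := Ideal.mul_mem_right s _ hx
    constructor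
    · intro h
      by_cases hbot : primeRadical R ^ i = ⊥
      · rw [hbot, Submodule.mem_bot] at hx
        rw [hx]
        exact T.zero_mem
      · rw [← hT.fMk_eq_zero_iff hx]
        exact hinj i hi hbot s hs x hx hxs ((hT.fMk_eq_zero_iff hxs).2 h)
    · intro h
      obtain ⟨c, hc, hcx⟩ := (hT x hx).1 h
      refine (hT _ hxs).2 ⟨c, hc, ?_⟩
      rw [← mul_assoc]
      exact Ideal.mul_mem_right s _ hcx
  · by_cases hbot : primeRadical R ^ i = ⊥
    · intro h
      refine h.1 0 ?_
      have := hx 0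
      rw [hbot, Submodule.mem_bot] at this
      rw [this]
      exact T.zero_mem
    · exact hT.noInfiniteIndepFamily_fMod_iff.1 (hind i hi hbot) x hx

theorem exists_ore_of_isGoodTorsionIdeal (hπsurj : Function.Surjective π)
    (hπker : RingHom.ker π = primeRadical R) (hA : IsLeftGoldie Rbar)
    (hgood : ∀ i, ∃ T, IsGoodTorsionIdeal π i T) (hnil : IsNilpotentIdeal (primeRadical R))
    (a : R) {s : R} (hs : IsRegElem (π s)) :
    ∃ t : R, IsRegElem (π t) ∧ ∃ b : R, t * a = b * s := by
  have key : ∀ i, ∃ t : R, IsRegElem (π t) ∧ ∃ b : R, t * a - b * s ∈ primeRadical R ^ i := by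
    intro i
    induction i with
    | zero =>
      exact ⟨1, by simp [IsRegElem], 0, by rw [Submodule.pow_zero, Ideal.one_eq_top]; trivial⟩
    | succ i ih =>
      obtain ⟨t, ht, b, hb⟩ := ih
      obtain ⟨T, hT⟩ := hgood i
      obtain ⟨t', ht', y, hy⟩ := exists_ore_of_isTorsionIdeal hπsurj hπker hA
        hT.isTorsionIdeal (hT.mul_mem_iff s hs) hT.not_isRelIndepSeq hb
      refine ⟨t' * t, by rw [map_mul]; exact ht'.mul ht, t' * b + y, ?_⟩
      convert hy using 1
      noncomm_ring
  obtain ⟨k, hk⟩ := hnil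
  obtain ⟨t, ht, b, hb⟩ := key (k + 1)
  rw [hk, Submodule.mem_bot, sub_eq_zero] at hb
  exact ⟨t, ht, b, hb⟩

/-- The elements of `R` whose image in `R̄` is regular. -/
def regComap (π : R →+* Rbar) : Submonoid R := (nonZeroDivisors Rbar).comap π

theorem mem_regComap {c : R} : c ∈ regComap π ↔ IsRegElem (π c) :=
  isRegElem_iff_mem_nonZeroDivisors.symm

theorem exists_isLeftFractionMap (S : Submonoid R) (hS : ∀ s ∈ S, IsRegElem s)
    (hore : ∀ (a : R), ∀ s ∈ S, ∃ t ∈ S, ∃ b : R, t * a = b * s) :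
    ∃ (Q : Type u) (_ : Ring Q) (φ : R →+* Q), IsLeftFractionMap S φ := by
  choose! t ht b hb using hore
  let _ : OreLocalization.OreSet S :=
    { ore_right_cancel := fun r₁ r₂ s h => by
        refine ⟨1, ?_⟩
        rw [← sub_eq_zero, ← sub_mul] at h
        rw [sub_eq_zero.1 ((hS s s.2).2 _ h)]
      oreNum := fun r s => b r s
      oreDenom := fun r s => ⟨t r s, ht r s s.2⟩
      ore_eq := fun r s => hb r s s.2 }
  have hle : S ≤ nonZeroDivisorsLeft R := fun s hs => by
    rw [mem_nonZeroDivisorsLeft_iff]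
    exact (hS s hs).1
  refine ⟨OreLocalization S R, inferInstance, OreLocalization.numeratorRingHom,
    OreLocalization.numeratorHom_inj hle, fun s hs => OreLocalization.numerator_isUnit ⟨s, hs⟩,
    fun q => ?_⟩
  induction q using OreLocalization.ind with
  | _ r s =>
    exact ⟨s, s.2, r, OreLocalization.mul_cancel⟩

end Sufficiency

section ArtinianQuotient

variable {R : Type u} {Rbar : Type v} [Ring R] [Ring Rbar] {π : R →+* Rbar}
  {Q : Type*} [Ring Q] {φ : R →+* Q}

theorem map_mul_mem_map_pow_succ (h : IsLeftFractionMap (regComap π) φ)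
    (hπker : RingHom.ker π = primeRadical R) {i : ℕ} {a : R} (ha : a ∈ primeRadical R) {q : Q}
    (hq : q ∈ (primeRadical R ^ i).map φ) : φ a * q ∈ (primeRadical R ^ (i + 1)).map φ := by
  obtain ⟨s, hs, b, hb, hsq⟩ := h.mem_map_iff.1 hq
  obtain ⟨t, ht, a', ha'⟩ := h.exists_ore a hs
  have ha'n : a' ∈ primeRadical R := by
    rw [← hπker, RingHom.mem_ker] at ha ⊢
    refine (mem_regComap.1 hs).2 _ ?_
    rw [← map_mul, ← ha', map_mul, ha, mul_zero]
  rw [← (h.isUnit t ht).mul_mem_ideal_iff, ← mul_assoc, ← map_mul, ha', map_mul, mul_assoc, hsq,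
    ← map_mul]
  refine Ideal.mem_map_of_mem φ ?_
  rw [Ideal.IsTwoSided.pow_succ]
  exact Ideal.mul_mem_mul ha'n hb

theorem isArtinian_map_pow_quotient (h : IsLeftFractionMap (regComap π) φ)
    (hπsurj : Function.Surjective π) (hπker : RingHom.ker π = primeRadical R)
    (hA : IsLeftGoldie Rbar) {i : ℕ} {T : Ideal R} (hT : IsGoodTorsionIdeal π i T) :
    IsArtinian Q (↥((primeRadical R ^ i).map φ) ⧸
      Submodule.comap ((primeRadical R ^ i).map φ).subtype ((primeRadical R ^ (i + 1)).map φ)) := by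
  set J := (primeRadical R ^ i).map φ with hJ
  set J' := (primeRadical R ^ (i + 1)).map φ with hJ'
  have : IsSemisimpleModule Q (↥J ⧸ Submodule.comap J.subtype J') := by
    refine isSemisimpleModule_of_essential_eq_top fun E hE => ?_
    rw [Submodule.eq_top_iff']
    intro m
    let I (F : Submodule Q (↥J ⧸ Submodule.comap J.subtype J')) : Ideal R :=
      Ideal.comap φ (Submodule.comap (LinearMap.toSpanSingleton Q _ m) F)
    have hI : ∀ F r, r ∈ I F ↔ φ r • m ∈ F := fun F r => Iff.rfl
    obtain ⟨c, hcI, hc⟩ := exists_isRegElem_map_mem hπsurj hπker hA (T := I ⊥) (I := I E)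
      (fun a ha => by
        rw [hI, Submodule.mem_bot]
        obtain ⟨q, rfl⟩ := Submodule.Quotient.mk_surjective _ m
        rw [← Submodule.Quotient.mk_smul, Submodule.Quotient.mk_eq_zero]
        exact map_mul_mem_map_pow_succ h hπker ha q.2)
      (fun r hr => by
        rw [hI, Submodule.mem_bot] at hr
        rw [hI, hr]
        exact E.zero_mem)
      (fun r hr => by
        rw [hI, Submodule.mem_bot] at hr
        obtain ⟨q, hq, hqE⟩ := hE _ hr
        obtain ⟨s, hs, r', hr'⟩ := h.denom q
        have heq : φ (r' * r) • m = φ s • q • φ r • m := by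
          rw [map_mul, ← hr', mul_smul, mul_smul]
        refine ⟨r', ?_, ?_⟩
        · rw [hI, heq, Submodule.mem_bot, (h.isUnit s hs).smul_eq_zero]
          exact hq
        · rw [hI, heq]
          exact E.smul_mem _ hqE)
    rw [hI] at hcI
    exact (E.smul_mem_iff_of_isUnit (h.isUnit c (mem_regComap.2 hc))).1 hcI
  refine isArtinian_of_noInfiniteIndepFamily (noInfiniteIndepFamily_iff.2 fun x hx => ?_)
  choose y hy using fun k => Submodule.mkQ_surjective (Submodule.comap J.subtype J') (x k)
  have hyJ : IsRelIndepSeq J' (fun k => (y k : Q)) := by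
    have : IsRelIndepSeq (Submodule.comap J.subtype J') y := by
      rw [← isRelIndepSeq_mkQ_iff]
      simpa only [hy] using hx
    exact (isRelIndepSeq_comap_iff J.subtype).1 this
  choose s hs a ha hsa using fun k => h.mem_map_iff.1 (y k).2
  refine hT.not_isRelIndepSeq a ha ((h.isRelIndepSeq_numerators hyJ hs hsa).congr ha
    fun m hm => ?_)
  rw [h.mem_comap_map_iff, hT.isTorsionIdeal m hm]
  simp only [mem_regComap]

theorem hasArtinianLeftQuot_of_isGoodTorsionIdeal (hπsurj : Function.Surjective π)
    (hπker : RingHom.ker π = primeRadical R) (hA : IsLeftGoldie Rbar)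
    (hnil : IsNilpotentIdeal (primeRadical R)) (hC : ∀ c : R, IsRegElem (π c) → IsRegElem c)
    (hgood : ∀ i, ∃ T, IsGoodTorsionIdeal π i T) : HasArtinianLeftQuot R := by
  obtain ⟨Q, _, φ, h⟩ := exists_isLeftFractionMap (regComap π)
    (fun s hs => hC s (mem_regComap.1 hs)) (fun a s hs => by
      simpa only [mem_regComap] using exists_ore_of_isGoodTorsionIdeal hπsurj hπker hA hgood hnil a
        (mem_regComap.1 hs))
  have hart : IsArtinianRing Q := by
    obtain ⟨k, hk⟩ := hnil
    refine isArtinianRing_of_filtration (fun i => (primeRadical R ^ i).map φ) (fun i => ?_) ?_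
      (k := k + 1) ?_ fun i => ?_
    · refine Ideal.map_mono ?_
      rw [Ideal.IsTwoSided.pow_succ]
      exact Ideal.mul_le.2 fun a _ b hb => Ideal.mul_mem_left _ a hb
    · simp only [Submodule.pow_zero, Ideal.one_eq_top, Ideal.map_top]
    · simp only [hk, Ideal.map_bot]
    · obtain ⟨T, hT⟩ := hgood i
      exact isArtinian_map_pow_quotient h hπsurj hπker hA hT
  refine ⟨⟨Q, φ, h.inj, fun c hc => isUnit_of_isArtinianRing fun q hq => ?_, fun q => ?_⟩, hart⟩
  · obtain ⟨s, hs, r, hr⟩ := h.denom q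
    rw [← (h.isUnit s hs).mul_right_eq_zero, hr]
    have : r * c = 0 := h.inj (by rw [map_mul, ← hr, mul_assoc, hq, mul_zero, map_zero])
    rw [hc.2 r this, map_zero]
  · obtain ⟨s, hs, r, hr⟩ := h.denom q
    exact ⟨s, r, hC s (mem_regComap.1 hs), hr⟩

end ArtinianQuotient

section Necessity

theorem IsLeftFractionMap.map_comap {R Q : Type*} [Ring R] [Ring Q] {S : Submonoid R} {φ : R →+* Q}
    (h : IsLeftFractionMap S φ) (I : Ideal Q) : (I.comap φ).map φ = I := by
  refine le_antisymm Ideal.map_comap_le fun q hq => ?_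
  obtain ⟨s, hs, r, hr⟩ := h.denom q
  exact h.mem_map_iff.2 ⟨s, hs, r, by rw [Ideal.mem_comap, ← hr]; exact I.mul_mem_left _ hq, hr⟩

theorem pow_mem_ideal_pow {R : Type*} [Ring R] {I : Ideal R} {x : R} (hx : x ∈ I) (n : ℕ) :
    x ^ n ∈ I ^ n := by
  induction n with
  | zero => rw [Submodule.pow_zero, Ideal.one_eq_top]; trivial
  | succ n ih =>
    rw [pow_succ, Submodule.pow_succ]
    exact Ideal.mul_mem_mul ih hx

variable {R : Type u} {Q : Type v} [Ring R] [Ring Q] {φ : R →+* Q}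

namespace IsLeftQuotRing

theorem map_isTwoSided [IsArtinianRing Q] (h : IsLeftQuotRing φ) (A : Ideal R) [A.IsTwoSided] :
    (A.map φ).IsTwoSided := by
  have hright : ∀ l ∈ A.map φ, ∀ r, l * φ r ∈ A.map φ := by
    intro l hl r
    obtain ⟨s, hs, a, ha, hsl⟩ := h.isLeftFractionMap.mem_map_iff.1 hl
    refine h.isLeftFractionMap.mem_map_iff.2 ⟨s, hs, a * r, Ideal.mul_mem_right _ _ ha, ?_⟩
    rw [← mul_assoc, hsl, map_mul]
  refine ⟨fun {l} q hl => ?_⟩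
  obtain ⟨c, r, hc, hcq⟩ := h.denom q
  let f : ↥(A.map φ) →ₗ[Q] ↥(A.map φ) :=
    (LinearMap.toSpanSingleton Q Q (φ c)).restrict fun x hx => hright x hx c
  have hf : Function.Injective f := by
    refine (injective_iff_map_eq_zero f).2 fun x hx => Subtype.ext ?_
    have hx' : (x : Q) * φ c = 0 := congrArg Subtype.val hx
    exact (h.isUnit c hc).mul_left_eq_zero.1 hx'
  obtain ⟨l', hl'⟩ := IsArtinian.surjective_of_injective_endomorphism f hf ⟨l, hl⟩
  have hl'' : (l' : Q) * φ c = l := congrArg Subtype.val hl'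
  rw [← hl'', mul_assoc, hcq]
  exact hright _ l'.2 r

theorem isPrimeNC_comap [IsArtinianRing Q] (h : IsLeftQuotRing φ) {P : Ideal Q}
    (hP : P.IsPrimeNC) : (P.comap φ).IsPrimeNC := by
  obtain ⟨hne, htwo, hprime⟩ := hP
  refine ⟨fun htop => hne ?_, fun a ha r => ?_, fun a b hab => ?_⟩
  · rw [Ideal.eq_top_iff_one] at htop ⊢
    simpa using htop
  · rw [Ideal.mem_comap, map_mul]
    exact htwo _ ha _
  · let A : Ideal R :=
      { carrier := {x | ∀ r, φ (x * r * b) ∈ P}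
        add_mem' := fun hx hy r => by
          rw [add_mul, add_mul, map_add]
          exact P.add_mem (hx r) (hy r)
        zero_mem' := fun r => by simp
        smul_mem' := fun c x hx r => by
          rw [smul_eq_mul, mul_assoc, mul_assoc, map_mul, ← mul_assoc x]
          exact P.mul_mem_left _ (hx r) }
    have : A.IsTwoSided := ⟨fun {x} y hx r => by
      have := hx (y * r)
      rwa [← mul_assoc] at this⟩
    have hL := h.map_isTwoSided A
    refine hprime (φ a) (φ b) fun q => ?_
    have haq : φ a * q ∈ A.map φ := hL.mul_mem_of_left q (Ideal.mem_map_of_mem φ hab)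
    obtain ⟨s, hs, x, hx, hsx⟩ := h.isLeftFractionMap.mem_map_iff.1 haq
    rw [← (h.isLeftFractionMap.isUnit s hs).mul_mem_ideal_iff, ← mul_assoc, hsx, ← map_mul]
    simpa using hx 1

theorem comap_primeRadical [IsArtinianRing Q] (h : IsLeftQuotRing φ) :
    (primeRadical Q).comap φ = primeRadical R := by
  apply le_antisymm
  · obtain ⟨k, hk⟩ := exists_primeRadical_pow_eq_bot_of_isArtinianRing (R := Q)
    have hpow : ∀ m, (primeRadical Q).comap φ ^ m ≤ (primeRadical Q ^ m).comap φ := by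
      intro m
      induction m with
      | zero => simp only [Submodule.pow_zero, Ideal.one_eq_top, Ideal.comap_top, le_refl]
      | succ m ih =>
        rw [Submodule.pow_succ, Submodule.pow_succ]
        refine Ideal.mul_le.2 fun a ha b hb => ?_
        rw [Ideal.mem_comap, map_mul]
        exact Ideal.mul_mem_mul (ih ha) hb
    refine le_primeRadical_of_pow_eq_bot (k := k + 1) ((Submodule.eq_bot_iff _).2 fun x hx => ?_)
    have := hpow _ hx
    rw [hk, Ideal.mem_comap, Submodule.mem_bot] at this
    exact h.inj (by rw [this, map_zero])
  · intro x hx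
    refine (Submodule.mem_sInf).2 fun P hP => ?_
    exact (Submodule.mem_sInf).1 hx _ (h.isPrimeNC_comap hP)

theorem map_primeRadical_pow [IsArtinianRing Q] (h : IsLeftQuotRing φ) (k : ℕ) :
    (primeRadical R ^ k).map φ = primeRadical Q ^ k := by
  induction k with
  | zero => rw [Submodule.pow_zero, Submodule.pow_zero, Ideal.one_eq_top, Ideal.one_eq_top,
      Ideal.map_top]
  | succ k ih =>
    rw [Ideal.IsTwoSided.pow_succ, Ideal.IsTwoSided.pow_succ, ← ih]
    apply le_antisymm
    · rw [Ideal.map_le_iff_le_comap]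
      refine Ideal.mul_le.2 fun a ha b hb => ?_
      rw [Ideal.mem_comap, map_mul]
      refine Ideal.mul_mem_mul ?_ (Ideal.mem_map_of_mem φ hb)
      rwa [← Ideal.mem_comap, h.comap_primeRadical]
    · refine Ideal.mul_le.2 fun x hx y hy => ?_
      obtain ⟨s, hs, b, hb, hsy⟩ := h.isLeftFractionMap.mem_map_iff.1 hy
      obtain ⟨u, hu⟩ := h.isLeftFractionMap.isUnit s hs
      have hxu : x * (↑u⁻¹ : Q) ∈ primeRadical Q := Ideal.mul_mem_right _ _ hx
      rw [← h.isLeftFractionMap.map_comap (primeRadical Q), h.comap_primeRadical] at hxu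
      obtain ⟨t, ht, a, ha, hta⟩ := h.isLeftFractionMap.mem_map_iff.1 hxu
      refine h.isLeftFractionMap.mem_map_iff.2 ⟨t, ht, a * b, Ideal.mul_mem_mul ha hb, ?_⟩
      rw [map_mul, ← hta, ← hsy, ← hu]
      simp [mul_assoc]

theorem map_primeRadical [IsArtinianRing Q] (h : IsLeftQuotRing φ) :
    (primeRadical R).map φ = primeRadical Q := by
  simpa only [Submodule.pow_one] using h.map_primeRadical_pow 1

theorem primeRadical_pow_eq_bot_iff [IsArtinianRing Q] (h : IsLeftQuotRing φ) (k : ℕ) :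
    primeRadical Q ^ k = ⊥ ↔ primeRadical R ^ k = ⊥ := by
  rw [← h.map_primeRadical_pow, Ideal.map_eq_bot_iff_of_injective h.inj]

theorem isNilpotentIdeal_primeRadical [IsArtinianRing Q] (h : IsLeftQuotRing φ) :
    IsNilpotentIdeal (primeRadical R) := by
  obtain ⟨k, hk⟩ := exists_primeRadical_pow_eq_bot_of_isArtinianRing (R := Q)
  exact ⟨k, (h.primeRadical_pow_eq_bot_iff _).1 hk⟩

variable {Rbar : Type*} [Ring Rbar] {π : R →+* Rbar}

theorem map_mem_primeRadical_iff [IsArtinianRing Q] (h : IsLeftQuotRing φ)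
    (hπker : RingHom.ker π = primeRadical R) {x : R} : φ x ∈ primeRadical Q ↔ π x = 0 := by
  rw [← Ideal.mem_comap, h.comap_primeRadical, ← hπker, RingHom.mem_ker]

theorem isRegElem_map_iff [IsArtinianRing Q] (h : IsLeftQuotRing φ)
    (hπsurj : Function.Surjective π) (hπker : RingHom.ker π = primeRadical R) {c : R} :
    IsRegElem (π c) ↔ IsRegElem c := by
  constructor
  · intro hc
    have hunit : IsUnit (Ideal.Quotient.mk (primeRadical Q) (φ c)) := by
      refine isUnit_of_isArtinianRing fun q hq => ?_
      obtain ⟨q, rfl⟩ := Ideal.Quotient.mk_surjective q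
      obtain ⟨s, r, hs, hr⟩ := h.denom q
      rw [← map_mul, Ideal.Quotient.eq_zero_iff_mem] at hq
      rw [Ideal.Quotient.eq_zero_iff_mem, ← (h.isUnit s hs).mul_mem_ideal_iff, hr,
        h.map_mem_primeRadical_iff hπker]
      refine hc.2 _ ?_
      rw [← map_mul, ← h.map_mem_primeRadical_iff hπker, map_mul, ← hr, mul_assoc]
      exact Ideal.mul_mem_left _ _ hq
    obtain ⟨q, hq⟩ := hunit.exists_right_inv
    obtain ⟨q, rfl⟩ := Ideal.Quotient.mk_surjective q
    have hmem : φ c * q - 1 ∈ primeRadical Q := by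
      rw [← Ideal.Quotient.eq_zero_iff_mem, map_sub, map_mul, hq, map_one, sub_self]
    have hcq : IsUnit (φ c * q) := by
      obtain ⟨k, hk⟩ := exists_primeRadical_pow_eq_bot_of_isArtinianRing (R := Q)
      have hnil : IsNilpotent (φ c * q - 1) := ⟨k + 1, by
        rw [← Submodule.mem_bot Q, ← hk]
        exact pow_mem_ideal_pow hmem _⟩
      simpa using hnil.isUnit_one_add
    refine IsRegElem.of_injective h.inj (isUnit_of_isArtinianRing fun x hx => ?_)
    rw [← hcq.mul_left_eq_zero, ← mul_assoc, hx, zero_mul]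
  · intro hc
    obtain ⟨u, hu⟩ := h.isUnit c hc
    constructor <;> intro x <;> obtain ⟨x, rfl⟩ := hπsurj x <;>
      rw [← map_mul, ← h.map_mem_primeRadical_iff hπker, ← h.map_mem_primeRadical_iff hπker,
        map_mul]
    · exact (h.isUnit c hc).mul_mem_ideal_iff.1
    · intro hx
      have := Ideal.mul_mem_right (↑u⁻¹ : Q) _ hx
      simpa [← hu, mul_assoc] using this

theorem isTorsionIdeal_comap [IsArtinianRing Q] (h : IsLeftQuotRing φ)
    (hπsurj : Function.Surjective π) (hπker : RingHom.ker π = primeRadical R) (i : ℕ) :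
    IsTorsionIdeal π i ((primeRadical Q ^ (i + 1)).comap φ) := by
  intro x _
  rw [← h.map_primeRadical_pow, h.isLeftFractionMap.mem_comap_map_iff]
  simp only [h.isRegElem_map_iff hπsurj hπker, isRegElem_iff_mem_nonZeroDivisors]

theorem not_isRelIndepSeq_comap [IsArtinianRing Q] (h : IsLeftQuotRing φ) (I : Ideal Q)
    (x : ℕ → R) : ¬ IsRelIndepSeq (I.comap φ) x := fun hx =>
  not_isRelIndepSeq_of_isNoetherian _ _ (h.isLeftFractionMap.isRelIndepSeq_map hx)

theorem accLeftAnnihilators [IsArtinianRing Q] (h : IsLeftQuotRing φ)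
    (hπsurj : Function.Surjective π) (hπker : RingHom.ker π = primeRadical R) :
    ACCLeftAnnihilators Rbar := by
  intro f hf hmono
  let L (i : ℕ) : Ideal Q :=
    { carrier := {q | ∀ x : R, (∀ y ∈ f i, y * π x = 0) → q * φ x ∈ primeRadical Q}
      add_mem' := fun ha hb x hx => by
        rw [add_mul]
        exact Ideal.add_mem _ (ha x hx) (hb x hx)
      zero_mem' := fun x _ => by simp
      smul_mem' := fun c q hq x hx => by
        rw [smul_eq_mul, mul_assoc]
        exact Ideal.mul_mem_left _ _ (hq x hx) }
  have hfL : ∀ i r, π r ∈ f i ↔ φ r ∈ L i := by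
    intro i r
    have hL : φ r ∈ L i ↔ ∀ x : R, (∀ y ∈ f i, y * π x = 0) → π r * π x = 0 := by
      refine forall₂_congr fun x _ => ?_
      rw [← map_mul, ← map_mul, h.map_mem_primeRadical_iff hπker]
    rw [hL]
    refine ⟨fun hr x hx => hx _ hr, fun hr => ?_⟩
    obtain ⟨S, hS⟩ := hf i
    rw [hS]
    intro s hs
    obtain ⟨x, rfl⟩ := hπsurj s
    refine hr x fun y hy => ?_
    rw [hS] at hy
    exact hy _ hs
  obtain ⟨N, hN⟩ := monotone_stabilizes_iff_noetherian.2 (inferInstance : IsNoetherian Q Q)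
    ⟨L, fun i j hij q hq x hx => hq x fun y hy => hx y (hmono i j hij hy)⟩
  refine ⟨N, fun k hk => Set.ext fun y => ?_⟩
  obtain ⟨r, rfl⟩ := hπsurj y
  rw [hfL, hfL]
  exact SetLike.ext_iff.1 (hN k hk).symm _

theorem isLeftGoldie [IsArtinianRing Q] (h : IsLeftQuotRing φ)
    (hπsurj : Function.Surjective π) (hπker : RingHom.ker π = primeRadical R) :
    IsLeftGoldie Rbar := by
  refine ⟨h.accLeftAnnihilators hπsurj hπker, ?_⟩
  rw [noInfiniteIndepFamily_self_iff_of_surjective hπsurj, hπker, ← h.comap_primeRadical]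
  exact h.not_isRelIndepSeq_comap _

theorem fMk_eq_zero_of_mul [IsArtinianRing Q] (h : IsLeftQuotRing φ)
    (hπsurj : Function.Surjective π) (hπker : RingHom.ker π = primeRadical R) {i : ℕ} {c : R}
    (hc : IsRegElem (π c)) {x : R} (hx : x ∈ primeRadical R ^ i)
    (hxc : x * c ∈ primeRadical R ^ i) (h0 : fMk π i (x * c) hxc = 0) : fMk π i x hx = 0 := by
  have hT := h.isTorsionIdeal_comap hπsurj hπker i
  rw [hT.fMk_eq_zero_iff, Ideal.mem_comap, map_mul] at h0
  rw [hT.fMk_eq_zero_iff, Ideal.mem_comap]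
  obtain ⟨u, hu⟩ := h.isUnit c ((h.isRegElem_map_iff hπsurj hπker).1 hc)
  simpa [← hu, mul_assoc] using Ideal.mul_mem_right (↑u⁻¹ : Q) _ h0

theorem coe_primeRadical_eq_locSet [IsArtinianRing Q] (h : IsLeftQuotRing φ) :
    (↑(primeRadical Q) : Set Q) = locSet φ (primeRadical R) := by
  ext q
  rw [SetLike.mem_coe, ← h.map_primeRadical, h.isLeftFractionMap.mem_map_iff]
  simp only [locSet, Set.mem_ofPred_eq, isRegElem_iff_mem_nonZeroDivisors]
  exact ⟨fun ⟨s, hs, a, ha⟩ => ⟨s, a, hs, ha⟩, fun ⟨s, a, hs, ha⟩ => ⟨s, hs, a, ha⟩⟩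

theorem isLeftQuotRing_lift [IsArtinianRing Q] (h : IsLeftQuotRing φ)
    (hπsurj : Function.Surjective π) (hπker : RingHom.ker π = primeRadical R)
    {ψ : Rbar →+* Q ⧸ primeRadical Q}
    (hψ : ψ.comp π = (Ideal.Quotient.mk (primeRadical Q)).comp φ) : IsLeftQuotRing ψ := by
  have hψ' : ∀ x, ψ (π x) = Ideal.Quotient.mk (primeRadical Q) (φ x) := RingHom.congr_fun hψ
  refine ⟨(injective_iff_map_eq_zero ψ).2 fun x hx => ?_, fun c hc => ?_, fun q => ?_⟩
  · obtain ⟨x, rfl⟩ := hπsurj x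
    rwa [hψ', Ideal.Quotient.eq_zero_iff_mem, h.map_mem_primeRadical_iff hπker] at hx
  · obtain ⟨c, rfl⟩ := hπsurj c
    rw [hψ']
    exact (h.isUnit c ((h.isRegElem_map_iff hπsurj hπker).1 hc)).map _
  · obtain ⟨q, rfl⟩ := Ideal.Quotient.mk_surjective q
    obtain ⟨c, r, hc, hr⟩ := h.denom q
    refine ⟨π c, π r, (h.isRegElem_map_iff hπsurj hπker).2 hc, ?_⟩
    rw [hψ', hψ', ← hr, map_mul]

/-- A left quotient ring is small in the universe of the base ring. -/
theorem small (h : IsLeftQuotRing φ) : Small.{u} Q := by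
  choose c r hc hr using h.denom
  refine small_of_injective (β := R × R) (f := fun q => (c q, r q)) fun q q' hqq' => ?_
  obtain ⟨hcc, hrr⟩ := Prod.mk.inj hqq'
  refine (h.isUnit (c q) (hc q)).mul_left_cancel ?_
  rw [hr, hrr, ← hr, hcc]

theorem ringEquiv_comp {Q' : Type*} [Ring Q'] (h : IsLeftQuotRing φ) (e : Q ≃+* Q') :
    IsLeftQuotRing ((e : Q →+* Q').comp φ) := by
  refine ⟨e.injective.comp h.inj, fun c hc => (h.isUnit c hc).map e, fun q => ?_⟩
  obtain ⟨c, r, hc, hr⟩ := h.denom (e.symm q)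
  refine ⟨c, r, hc, ?_⟩
  simp [← hr]

end IsLeftQuotRing

end Necessity

/-- **Theorem (Bavula, Theorem 2 / `2Sep12`).**
Let `R` be a ring, `n` its prime radical, `R̄ = R/n` (realized by a surjective ring
homomorphism `π : R → R̄` with kernel `n`).  The following are equivalent:
(1) `R` has a left Artinian left quotient ring `Q = C⁻¹R`;
(2) (a) `R̄` is a left Goldie ring, (b) `n` is a nilpotent ideal, (c) `C' ⊆ C`,
(d) for every `1 ≤ i ≤ ν` the left `R̄`-module `f_i` contains no infinite direct sum of
nonzero submodules, and (e) for every `c̄ ∈ C̄` right multiplication by `c̄` on `f_i` is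
injective for all `1 ≤ i ≤ ν` (the range `1 ≤ i ≤ ν` is encoded as `1 ≤ i` and `n^i ≠ ⊥`).
Moreover, if these conditions hold then `C = C'`, `C⁻¹n` is the prime radical of `Q` and is
nilpotent of nilpotency degree `ν` (encoded: `(primeRadical Q)^k = ⊥ ↔ n^k = ⊥` for all `k`),
and the map `Q/C⁻¹n → Q̄`, `c⁻¹r + C⁻¹n ↦ c̄⁻¹r̄`, is a ring isomorphism (encoded by a
surjective ring homomorphism `θ : Q → Q̄` with kernel `C⁻¹n` satisfying `θ ∘ φ = ψ ∘ π`). -/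
theorem left_artinian_left_quotient_ring_criterion
    {R : Type u} [Ring R] (Rbar : Type v) [Ring Rbar] (π : R →+* Rbar)
    (hπsurj : Function.Surjective π) (hπker : RingHom.ker π = primeRadical R) :
    (HasArtinianLeftQuot R ↔
      (IsLeftGoldie Rbar ∧
        IsNilpotentIdeal (primeRadical R) ∧
        (∀ c : R, IsRegElem (π c) → IsRegElem c) ∧
        (∀ i : ℕ, 1 ≤ i → primeRadical R ^ i ≠ ⊥ → NoInfiniteIndepFamily R (fMod π i)) ∧
        (∀ i : ℕ, 1 ≤ i → primeRadical R ^ i ≠ ⊥ →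
          ∀ c : R, IsRegElem (π c) →
            ∀ (x : R) (hx : x ∈ primeRadical R ^ i) (hxc : x * c ∈ primeRadical R ^ i),
              fMk π i (x * c) hxc = 0 → fMk π i x hx = 0))) ∧
    (HasArtinianLeftQuot R →
      (regSet R = {c : R | IsRegElem (π c)}) ∧
      ∀ d : LeftQuotData R, IsArtinianRing d.Q →
        ((↑(primeRadical d.Q) : Set d.Q) = locSet d.φ (primeRadical R)) ∧
        IsNilpotentIdeal (primeRadical d.Q) ∧
        (∀ k : ℕ, primeRadical d.Q ^ k = ⊥ ↔ primeRadical R ^ k = ⊥) ∧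
        ∃ (e : LeftQuotData Rbar) (θ : d.Q →+* e.Q),
          Function.Surjective θ ∧ RingHom.ker θ = primeRadical d.Q ∧
            θ.comp d.φ = e.φ.comp π) := by
  constructor
  · constructor
    · rintro ⟨d, hd⟩
      have h := d.quot
      exact ⟨h.isLeftGoldie hπsurj hπker, h.isNilpotentIdeal_primeRadical,
        fun c => (h.isRegElem_map_iff hπsurj hπker).1,
        fun i _ _ => (h.isTorsionIdeal_comap hπsurj hπker i).noInfiniteIndepFamily_fMod_iff.2
          fun x _ => h.not_isRelIndepSeq_comap _ x,
        fun i _ _ c hc x hx hxc => h.fMk_eq_zero_of_mul hπsurj hπker hc hx hxc⟩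
    · rintro ⟨hA, hnil, hC, hind, hinj⟩
      exact hasArtinianLeftQuot_of_isGoodTorsionIdeal hπsurj hπker hA hnil hC
        (exists_isGoodTorsionIdeal hπsurj hπker hA hind hinj)
  · rintro ⟨d₀, hd₀⟩
    refine ⟨Set.ext fun c => (d₀.quot.isRegElem_map_iff hπsurj hπker).symm, fun d hd => ?_⟩
    have h := d.quot
    refine ⟨h.coe_primeRadical_eq_locSet, exists_primeRadical_pow_eq_bot_of_isArtinianRing,
      h.primeRadical_pow_eq_bot_iff, ?_⟩
    let ψ : Rbar →+* d.Q ⧸ primeRadical d.Q :=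
      π.liftOfSurjective hπsurj ⟨(Ideal.Quotient.mk (primeRadical d.Q)).comp d.φ, fun x hx => by
        rwa [RingHom.mem_ker, RingHom.comp_apply, Ideal.Quotient.eq_zero_iff_mem,
          h.map_mem_primeRadical_iff hπker]⟩
    have hψ : ψ.comp π = (Ideal.Quotient.mk (primeRadical d.Q)).comp d.φ :=
      π.liftOfRightInverse_comp _ _ _
    have hq := h.isLeftQuotRing_lift hπsurj hπker hψ
    have := hq.small
    let e := (Shrink.ringEquiv (d.Q ⧸ primeRadical d.Q)).symm
    let g : d.Q ⧸ primeRadical d.Q →+* Shrink.{v} (d.Q ⧸ primeRadical d.Q) := e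
    refine ⟨⟨_, g.comp ψ, hq.ringEquiv_comp e⟩, g.comp (Ideal.Quotient.mk (primeRadical d.Q)),
      e.surjective.comp Ideal.Quotient.mk_surjective, ?_, ?_⟩
    · ext x
      rw [RingHom.mem_ker, RingHom.comp_apply, ← Ideal.Quotient.eq_zero_iff_mem]
      exact e.map_eq_zero_iff
    · rw [RingHom.comp_assoc, RingHom.comp_assoc, hψ]
end

section
/- Let R̄ be a semiprime left Goldie ring with set of regular elements C̄, and let M ⊆ N be C̄-torsionfree left R̄-modules such that udim(M) = udim(N) < ∞ (equal finite uniform dimensions). Then the R̄-module N/M is C̄-torsion, i.e. every element of N/M is annihilated by some element of C̄. -/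
open Function

universe u v

/-- There is an independent family of `k` nonzero submodules of `M`. -/
def HasIndepFamily (R : Type*) (M : Type*) [Ring R] [AddCommGroup M] [Module R M]
    (k : ℕ) : Prop :=
  ∃ f : Fin k → Submodule R M, (∀ i, f i ≠ ⊥) ∧ iSupIndep f

/-- The uniform (Goldie) dimension of `M` equals the (finite) number `d`:  there is an
independent family of `d` nonzero submodules, but none of `d + 1` nonzero submodules. -/
def UdimEq (R : Type*) (M : Type*) [Ring R] [AddCommGroup M] [Module R M] (d : ℕ) : Prop :=
  HasIndepFamily R M d ∧ ¬ HasIndepFamily R M (d + 1)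

/-- A ring is semiprime: it has no nonzero nilpotent (two-sided) ideals. -/
def IsSemiprimeRing (A : Type*) [Ring A] : Prop :=
  ∀ I : Ideal A, I.IsTwoSidedNC → (∃ k : ℕ, I ^ (k + 1) = ⊥) → I = ⊥

section SemiprimeGoldie

variable {A : Type*} [Ring A]

/-- If `B i ≤ L i` for a decreasing sequence `L` and `B i` meets `L (i + 1)` trivially, then the
family `B` is independent. -/
theorem iSupIndep_of_antitone {N : Type*} [AddCommGroup N] [Module A N]
    (L B : ℕ → Submodule A N) (hL : Antitone L) (hB : ∀ i, B i ≤ L i)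
    (hd : ∀ i, Disjoint (B i) (L (i + 1))) : iSupIndep B := by
  rw [iSupIndep_iff_supIndep]
  intro s
  induction s using Finset.induction_on_min with
  | empty => exact Finset.supIndep_empty _
  | insert a s ha ih =>
    refine ih.insert ((hd a).mono_right (Finset.sup_le fun i hi => ?_))
    exact (hB i).trans (hL (ha i hi))

/-- A left ideal is essential if every nonzero element has a nonzero left multiple in it. -/
def Ideal.IsEssentialLeft (I : Ideal A) : Prop :=
  ∀ a : A, a ≠ 0 → ∃ r : A, r * a ∈ I ∧ r * a ≠ 0

theorem Ideal.IsEssentialLeft.mono {I J : Ideal A} (hI : I.IsEssentialLeft) (h : I ≤ J) :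
    J.IsEssentialLeft := fun a ha =>
  let ⟨r, hr, hr0⟩ := hI a ha
  ⟨r, h hr, hr0⟩

theorem isLeftAnnihilatorSet_torsionOf (x : A) :
    IsLeftAnnihilatorSet (Ideal.torsionOf A A x : Set A) :=
  ⟨{x}, by ext; simp⟩

/-- Under the ascending chain condition on left annihilators, every nonempty set of elements has
a member with maximal left annihilator. -/
theorem ACCLeftAnnihilators.exists_maximal (h : ACCLeftAnnihilators A) {S : Set A}
    (hS : S.Nonempty) :
    ∃ z ∈ S, ∀ y ∈ S, Ideal.torsionOf A A z ≤ Ideal.torsionOf A A y →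
      Ideal.torsionOf A A y = Ideal.torsionOf A A z := by
  have : WellFoundedGT {T : Set A // IsLeftAnnihilatorSet T} := by
    rw [wellFoundedGT_iff_monotone_chain_condition]
    intro a
    obtain ⟨n, hn⟩ := h (fun i => (a i).1) (fun i => (a i).2) (fun i j hij => a.monotone hij)
    exact ⟨n, fun m hm => Subtype.ext (hn m hm).symm⟩
  let g : A → {T : Set A // IsLeftAnnihilatorSet T} :=
    fun x => ⟨Ideal.torsionOf A A x, isLeftAnnihilatorSet_torsionOf x⟩
  obtain ⟨_, ⟨z, hz, rfl⟩, hmax⟩ := this.wf.has_min (g '' S) (hS.image g)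
  refine ⟨z, hz, fun y hy hle => ?_⟩
  by_contra hne
  exact hmax (g y) ⟨y, hy, rfl⟩ (lt_of_le_of_ne (show g z ≤ g y from hle) fun he =>
    hne (SetLike.coe_injective (congrArg Subtype.val he).symm))

/-- Under the ascending chain condition on left annihilators, some positive power `b` of `a`
satisfies `l(b) = l(b ^ 2)`. -/
theorem ACCLeftAnnihilators.exists_pow (h : ACCLeftAnnihilators A) (a : A) :
    ∃ n : ℕ, 0 < n ∧ ∀ x : A, x * a ^ n * a ^ n = 0 → x * a ^ n = 0 := by
  obtain ⟨_, ⟨n, hn, rfl⟩, hmax⟩ := h.exists_maximal (S := {y | ∃ n : ℕ, 0 < n ∧ a ^ n = y})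
    ⟨a, 1, one_pos, pow_one a⟩
  refine ⟨n, hn, fun x hx => ?_⟩
  have he := hmax (a ^ n * a ^ n) ⟨n + n, by omega, pow_add a n n⟩ fun x hx => by
    rw [Ideal.mem_torsionOf_iff, smul_eq_mul] at hx ⊢
    rw [← mul_assoc, hx, zero_mul]
  have hx' : x ∈ Ideal.torsionOf A A (a ^ n * a ^ n) := by
    rwa [Ideal.mem_torsionOf_iff, smul_eq_mul, ← mul_assoc]
  rwa [he, Ideal.mem_torsionOf_iff, smul_eq_mul] at hx'

theorem IsSemiprimeRing.eq_zero_of_forall_mul_mul (hs : IsSemiprimeRing A) {z : A}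
    (hz : ∀ r : A, z * r * z = 0) : z = 0 := by
  let I : Ideal A := Submodule.span A {y | ∃ r : A, y = z * r}
  have hI : I.IsTwoSidedNC := by
    intro a ha r
    induction ha using Submodule.span_induction with
    | mem x hx =>
      obtain ⟨s, rfl⟩ := hx
      exact Submodule.subset_span ⟨s * r, mul_assoc _ _ _⟩
    | zero => rw [zero_mul]; exact I.zero_mem
    | add x y _ _ hx hy => rw [add_mul]; exact I.add_mem hx hy
    | smul t x _ hx => rw [smul_eq_mul, mul_assoc]; exact I.mul_mem_left t hx
  have hzI : ∀ y ∈ I, ∀ r : A, y * r * z = 0 := by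
    intro y hy
    induction hy using Submodule.span_induction with
    | mem x hx =>
      obtain ⟨s, rfl⟩ := hx
      intro r
      rw [mul_assoc z, hz]
    | zero => simp
    | add x y _ _ hx hy => intro r; rw [add_mul, add_mul, hx, hy, add_zero]
    | smul t x _ hx => intro r; rw [smul_eq_mul, mul_assoc, mul_assoc, ← mul_assoc x, hx, mul_zero]
  have hII : ∀ y ∈ I, ∀ x ∈ I, x * y = 0 := by
    intro y hy
    induction hy using Submodule.span_induction with
    | mem y hy =>
      obtain ⟨s, rfl⟩ := hy
      intro x hx
      have := hzI x hx 1
      rw [mul_one] at this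
      rw [← mul_assoc, this, zero_mul]
    | zero => simp
    | add y w _ _ hy hw => intro x hx; rw [mul_add, hy x hx, hw x hx, add_zero]
    | smul t y _ hy => intro x hx; rw [smul_eq_mul, ← mul_assoc]; exact hy _ (hI x hx t)
  have hbot : I = ⊥ := hs I hI ⟨1, by
    rw [Submodule.pow_succ, Submodule.pow_one, eq_bot_iff, Ideal.mul_le]
    exact fun x hx y hy => (Submodule.mem_bot A).2 (hII y hy x hx)⟩
  have : z ∈ I := Submodule.subset_span ⟨1, (mul_one z).symm⟩
  rwa [hbot, Submodule.mem_bot] at this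

/-- A semiprime ring with the ascending chain condition on left annihilators has no nonzero nil
right ideals. -/
theorem IsSemiprimeRing.eq_zero_of_nil_right (hs : IsSemiprimeRing A)
    (h : ACCLeftAnnihilators A) {a : A} (ha : ∀ r : A, IsNilpotent (a * r)) : a = 0 := by
  by_contra ha0
  obtain ⟨z, ⟨⟨s, rfl⟩, hz0⟩, hmax⟩ := h.exists_maximal (S := {z | (∃ s, z = a * s) ∧ z ≠ 0})
    ⟨a, ⟨1, (mul_one a).symm⟩, ha0⟩
  refine hz0 (hs.eq_zero_of_forall_mul_mul fun r => ?_)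
  by_cases hzr : a * s * r = 0
  · rw [hzr, zero_mul]
  have hnil : IsNilpotent (a * s * r) := by rw [mul_assoc]; exact ha _
  have : Nontrivial A := ⟨⟨_, _, ha0⟩⟩
  obtain ⟨k, hk⟩ : ∃ k, nilpotencyClass (a * s * r) = k + 2 := by
    have h0 := pos_nilpotencyClass_iff.2 hnil
    have h1 : nilpotencyClass (a * s * r) ≠ 1 := fun h1 => hzr (nilpotencyClass_eq_one.1 h1)
    exact ⟨nilpotencyClass (a * s * r) - 2, by omega⟩
  obtain ⟨hk1, hk2⟩ := nilpotencyClass_eq_succ_iff.1 hk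
  have he := hmax ((a * s * r) ^ (k + 1))
    ⟨⟨s * r * (a * s * r) ^ k, by rw [pow_succ']; simp only [mul_assoc]⟩, hk2⟩ fun x hx => by
      rw [Ideal.mem_torsionOf_iff, smul_eq_mul] at hx ⊢
      rw [pow_succ', ← mul_assoc, ← mul_assoc x, hx, zero_mul, zero_mul]
  have hm : a * s * r ∈ Ideal.torsionOf A A ((a * s * r) ^ (k + 1)) := by
    rw [Ideal.mem_torsionOf_iff, smul_eq_mul, ← pow_succ', hk1]
  rwa [he, Ideal.mem_torsionOf_iff, smul_eq_mul] at hm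

theorem IsSemiprimeRing.eq_zero_of_nil_left (hs : IsSemiprimeRing A)
    (h : ACCLeftAnnihilators A) {a : A} (ha : ∀ r : A, IsNilpotent (r * a)) : a = 0 := by
  refine hs.eq_zero_of_nil_right h fun r => ?_
  obtain ⟨n, hn⟩ := ha r
  refine ⟨n + 1, ?_⟩
  have hcomm : (a * r) ^ (n + 1) = a * (r * a) ^ n * r := by
    clear hn
    induction n with
    | zero => simp
    | succ n ih => rw [pow_succ, ih, pow_succ]; simp only [mul_assoc]
  rw [hcomm, hn, mul_zero, zero_mul]

/-- The left singular ideal of a semiprime ring with the ascending chain condition on left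
annihilators is zero. -/
theorem IsSemiprimeRing.eq_zero_of_isEssentialLeft_torsionOf (hs : IsSemiprimeRing A)
    (h : ACCLeftAnnihilators A) {a : A} (ha : (Ideal.torsionOf A A a).IsEssentialLeft) :
    a = 0 := by
  refine hs.eq_zero_of_nil_right h fun r => ?_
  obtain ⟨n, hn, hpow⟩ := h.exists_pow (a * r)
  refine ⟨n, ?_⟩
  by_contra hne
  have hle : Ideal.torsionOf A A a ≤ Ideal.torsionOf A A ((a * r) ^ n) := fun x hx => by
    obtain ⟨m, rfl⟩ := Nat.exists_eq_add_of_lt hn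
    rw [Ideal.mem_torsionOf_iff, smul_eq_mul] at hx ⊢
    rw [pow_succ', ← mul_assoc, ← mul_assoc x, hx, zero_mul, zero_mul]
  obtain ⟨x, hx, hx0⟩ := ha.mono hle _ hne
  rw [Ideal.mem_torsionOf_iff, smul_eq_mul] at hx
  exact hx0 (hpow x hx)

/-- If there are no infinite direct sums of nonzero left ideals, then `A c` is essential for every
`c` with zero left annihilator. -/
theorem NoInfiniteIndepFamily.isEssentialLeft_span (h : NoInfiniteIndepFamily A A) {c : A}
    (hc : ∀ x : A, x * c = 0 → x = 0) : (Ideal.span {c}).IsEssentialLeft := by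
  intro a ha
  by_contra! hcon
  have hcn : ∀ n : ℕ, ∀ x : A, x * c ^ n = 0 → x = 0 := by
    intro n
    induction n with
    | zero => simp
    | succ n ih => intro x hx; rw [pow_succ, ← mul_assoc] at hx; exact ih x (hc _ hx)
  refine h ⟨fun n => Ideal.span {a * c ^ n}, fun n hn => ?_, ?_⟩
  · exact ha (hcn n a (Ideal.span_singleton_eq_bot.1 hn))
  · refine iSupIndep_of_antitone (fun n => Ideal.span {c ^ n}) _ ?_ ?_ ?_
    · refine antitone_nat_of_succ_le fun n => ?_
      rw [Ideal.span_singleton_le_iff_mem, pow_succ']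
      exact Ideal.mul_mem_left _ _ (Ideal.mem_span_singleton_self _)
    · intro n
      rw [Ideal.span_singleton_le_iff_mem]
      exact Ideal.mul_mem_left _ _ (Ideal.mem_span_singleton_self _)
    · intro n
      rw [Submodule.disjoint_def]
      intro x hx hx'
      obtain ⟨r, rfl⟩ := Ideal.mem_span_singleton'.1 hx
      obtain ⟨s, hs⟩ := Ideal.mem_span_singleton'.1 hx'
      have : (r * a - s * c) * c ^ n = 0 := by
        rw [sub_mul, sub_eq_zero, mul_assoc, mul_assoc, ← pow_succ', hs]
      have h1 := sub_eq_zero.1 (hcn n _ this)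
      rw [← mul_assoc, hcon r (Ideal.mem_span_singleton'.2 ⟨s, h1.symm⟩), zero_mul]

/-- In a semiprime ring with the ascending chain condition on left annihilators, every nonzero
left ideal contains a nonzero `b` with `A b ∩ l(b) = 0`. -/
theorem IsSemiprimeRing.exists_mem_ne_zero (hs : IsSemiprimeRing A)
    (h : ACCLeftAnnihilators A) {K : Ideal A} {a : A} (haK : a ∈ K) (ha : a ≠ 0) :
    ∃ b ∈ K, b ≠ 0 ∧ ∀ x : A, x * b * b = 0 → x * b = 0 := by
  obtain ⟨r, hr⟩ : ∃ r : A, ¬ IsNilpotent (r * a) := by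
    by_contra! hcon
    exact ha (hs.eq_zero_of_nil_left h hcon)
  obtain ⟨n, hn, hpow⟩ := h.exists_pow (r * a)
  refine ⟨(r * a) ^ n, ?_, fun h0 => hr ⟨n, h0⟩, hpow⟩
  obtain ⟨m, rfl⟩ := Nat.exists_eq_add_of_lt hn
  rw [pow_succ]
  exact K.mul_mem_left _ (K.mul_mem_left _ haK)

/-- An essential left ideal of a semiprime left Goldie ring contains an element with zero left
annihilator. -/
theorem Ideal.IsEssentialLeft.exists_mem_forall_mul_eq_zero {I : Ideal A}
    (hI : I.IsEssentialLeft) (hs : IsSemiprimeRing A) (hg : IsLeftGoldie A) :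
    ∃ c ∈ I, ∀ x : A, x * c = 0 → x = 0 := by
  by_contra! hcon
  let T := {c : A // c ∈ I ∧ ∀ x : A, x * c * c = 0 → x * c = 0}
  have hstep : ∀ c : T, ∃ b : A, b ∈ I ∧ b ≠ 0 ∧ b * c.1 = 0 ∧
      ∀ x : A, x * b * b = 0 → x * b = 0 := by
    rintro ⟨c, hcI, hc⟩
    obtain ⟨x, hxc, hx⟩ := hcon c hcI
    obtain ⟨r, hr, hr0⟩ := hI x hx
    obtain ⟨b, ⟨hbI, hbc⟩, hb0, hb⟩ := hs.exists_mem_ne_zero hg.1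
      (K := I ⊓ Ideal.torsionOf A A c) ⟨hr, by
        simp [mul_assoc, hxc]⟩ hr0
    exact ⟨b, hbI, hb0, hbc, hb⟩
  choose b hbI hb0 hbc hb using hstep
  have hann : ∀ c : T, ∀ x : A, x * (c.1 + b c) = 0 → x * c.1 = 0 ∧ x * b c = 0 := by
    intro c x hx
    have h1 : x * c.1 = 0 := c.2.2 x (by
      have := congrArg (· * c.1) hx
      simpa [mul_add, add_mul, mul_assoc, hbc c] using this)
    exact ⟨h1, by rwa [mul_add, h1, zero_add] at hx⟩
  let next : T → T := fun c => ⟨c.1 + b c, I.add_mem c.2.1 (hbI c), fun x hx => by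
    obtain ⟨h1, h2⟩ := hann c _ hx
    have h3 : x * c.1 = 0 := c.2.2 x (by
      rwa [mul_assoc, add_mul, hbc, add_zero, ← mul_assoc] at h1)
    rw [mul_add, h3, zero_add] at h2 ⊢
    exact hb c x h2⟩
  let f : ℕ → T := fun n => next^[n] ⟨0, I.zero_mem, by simp⟩
  have hf : ∀ n, (f (n + 1)).1 = (f n).1 + b (f n) := fun n => by
    simp only [f, Function.iterate_succ_apply', next]
  refine hg.2 ⟨fun n => Ideal.span {b (f n)}, fun n hn =>
    hb0 _ (Ideal.span_singleton_eq_bot.1 hn), ?_⟩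
  refine iSupIndep_of_antitone (fun n => Ideal.torsionOf A A (f n).1) _ ?_ ?_ ?_
  · refine antitone_nat_of_succ_le fun n x hx => ?_
    rw [Ideal.mem_torsionOf_iff, smul_eq_mul] at hx ⊢
    rw [hf] at hx
    exact (hann _ x hx).1
  · intro n
    rw [Ideal.span_singleton_le_iff_mem]
    exact hbc _
  · intro n
    rw [Submodule.disjoint_def]
    intro x hx hx'
    obtain ⟨r, rfl⟩ := Ideal.mem_span_singleton'.1 hx
    rw [Ideal.mem_torsionOf_iff, smul_eq_mul, hf] at hx'
    exact hb _ r (hann _ _ hx').2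

/-- Goldie: an essential left ideal of a semiprime left Goldie ring contains a regular element. -/
theorem Ideal.IsEssentialLeft.exists_isRegElem {I : Ideal A} (hI : I.IsEssentialLeft)
    (hs : IsSemiprimeRing A) (hg : IsLeftGoldie A) : ∃ c ∈ I, IsRegElem c := by
  obtain ⟨c, hcI, hc⟩ := hI.exists_mem_forall_mul_eq_zero hs hg
  refine ⟨c, hcI, fun x hx => ?_, hc⟩
  refine hs.eq_zero_of_isEssentialLeft_torsionOf hg.1 ((hg.2.isEssentialLeft_span hc).mono ?_)
  rw [Ideal.span_singleton_le_iff_mem]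
  exact hx

/-- If `M ≤ N` contains an independent family of `d` nonzero submodules and `N` contains none of
`d + 1`, then every nonzero element of `N` has a nonzero multiple in `M`. -/
theorem HasIndepFamily.exists_smul_mem {N : Type*} [AddCommGroup N] [Module A N]
    {M : Submodule A N} {d : ℕ} (hM : HasIndepFamily A M d) (hN : ¬ HasIndepFamily A N (d + 1))
    {x : N} (hx : x ≠ 0) : ∃ r : A, r • x ∈ M ∧ r • x ≠ 0 := by
  by_contra! hcon
  obtain ⟨f, hf0, hf⟩ := hM
  refine hN ⟨Fin.cons (Submodule.span A {x}) fun i => (f i).map M.subtype, ?_, ?_⟩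
  · intro i
    refine Fin.cases ?_ (fun j => ?_) i
    · simpa using hx
    · rw [Fin.cons_succ, ← Submodule.map_bot M.subtype]
      exact (Submodule.map_injective_of_injective M.injective_subtype).ne (hf0 j)
  · have hf' := (LinearMap.iSupIndep_map M.subtype M.injective_subtype hf).sup_indep_univ
    rw [iSupIndep_iff_supIndep_univ, Fin.univ_succ, Finset.cons_eq_insert]
    refine Finset.SupIndep.insert ?_ ?_
    · rw [Finset.supIndep_map]
      exact hf'
    · rw [Finset.sup_map, Fin.cons_zero]
      have hle : (Finset.univ.sup fun i => (f i).map M.subtype) ≤ M :=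
        Finset.sup_le fun i _ => Submodule.map_subtype_le M (f i)
      refine Disjoint.mono_right hle ?_
      rw [Submodule.disjoint_def]
      intro y hy hyM
      obtain ⟨r, rfl⟩ := Submodule.mem_span_singleton.1 hy
      exact hcon r hyM

end SemiprimeGoldie

/-- **Lemma (`a2Sep12`).** Let `R̄` be a semiprime left Goldie ring with set of regular
elements `C̄`, and let `M ⊆ N` be `C̄`-torsionfree left `R̄`-modules with
`udim M = udim N < ∞`.  Then `N/M` is `C̄`-torsion, i.e. every element of `N/M` is
annihilated by some regular element (equivalently: for every `x ∈ N` there is `c̄ ∈ C̄`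
with `c̄ • x ∈ M`). -/
theorem torsion_of_equal_uniform_dimension
    {A : Type u} [Ring A] (hsemiprime : IsSemiprimeRing A) (hgoldie : IsLeftGoldie A)
    {N : Type v} [AddCommGroup N] [Module A N] (M : Submodule A N)
    (htfN : ∀ c : A, IsRegElem c → ∀ x : N, c • x = 0 → x = 0)
    (htfM : ∀ c : A, IsRegElem c → ∀ x : ↥M, c • x = 0 → x = 0)
    (d : ℕ) (hdM : UdimEq A ↥M d) (hdN : UdimEq A N d) :
    ∀ x : N, ∃ c : A, IsRegElem c ∧ c • x ∈ M := by
  intro x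
  let I : Ideal A := M.comap (LinearMap.toSpanSingleton A N x)
  have hI : I.IsEssentialLeft := by
    intro a ha
    by_cases hax : a • x = 0
    · exact ⟨1, by simp [I, hax], by simpa using ha⟩
    · obtain ⟨r, hr, hr0⟩ := hdM.1.exists_smul_mem hdN.2 hax
      rw [← mul_smul] at hr hr0
      exact ⟨r, hr, fun h0 => hr0 (by rw [h0, zero_smul])⟩
  obtain ⟨c, hcI, hc⟩ := hI.exists_isRegElem hsemiprime hgoldie
  exact ⟨c, hc, hcI⟩
end
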